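/- arXiv:0903.2512 — 2 statements merged into one kernel-verified Lean document; each statement's English description precedes it below -/
import Mathlib

section
/- Quadratic loop equation for the first matrix (eq. MLE.3): for every spectral parameter ξ ∈ ℂ ∖ [0,∞), all of the expectations below are finite and E[W₁(ξ)²] − V₁′(ξ)·E[W₁(ξ)] + E[P₁(ξ)] + E[Ξ₁(ξ)] + ξ⁻¹·E[I₁] = 0. -/
/-!
The loop equation is the statement that a divergence has zero integral. With `κ = N / T`, consider
the vector field on the orthant whose component along `x i` is `((ξ - x i)⁻¹ - ξ⁻¹) w` and whose
components along the `y j` vanish. The subtraction of `ξ⁻¹` makes the component along `x i` vanish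
at the wall `x i = 0`, where `w` has a finite limit (in fact `0`), so there is no boundary term
(`integral_orth_deriv_eq_zero`); at infinity the decay follows from integrability alone. The
divergence, computed in `sum_divTerm`, is `(N / T)²` times the integrand of the loop equation: the
logarithmic derivative of `Δ(x)²` combines with the derivatives of `(ξ - x i)⁻¹` into `W₁²`, the
derivative of the potential gives `- V₁' W₁ + P₁` and the first half of `ξ⁻¹ I₁`, and the Cauchy
factor gives `Ξ₁` and the second half of `ξ⁻¹ I₁`.

The analytic content is the integrability of each `∂ᵢ` term, singular at `x i = 0` through
`V₁'(x i)` and `1 / (x i + y j)`, and at `x a = x b` through the logarithmic derivative of `Δ(x)²`.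
Write `Δ(x)² Δ(y)² / ∏ (x i + y j)` as `Δ(x) Δ(y)` times the Cauchy determinant. Sorting both
families bounds the latter by `∏ x i ^ (-θ) y i ^ (-(1 - θ))` for any `θ ∈ [0, 1]`
(`cauchy_bound`), while the remaining copy of `Δ(x)` absorbs the pole `1 / (x b - x a)`
(`abs_vand_div_le`). With `0 < θ < κ a₁` the resulting majorant, a product over the eigenvalues,
stays integrable after multiplication by `∏ (1 + x i) ^ d₁ / x i`
(`integrableOn_growth_mul_maj`), and that product dominates every observable involved.
-/

open MeasureTheory

namespace CauchyLoop
open Set Filter Topology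

/-! ### Integration over the orthant -/

/-- The open orthant `(0,∞)^N × (0,∞)^M`. -/
def orth (N M : ℕ) : Set ((Fin N → ℝ) × (Fin M → ℝ)) :=
  {p | (∀ i, 0 < p.1 i) ∧ (∀ j, 0 < p.2 j)}

lemma orth_eq (N M : ℕ) : orth N M =
    (Set.univ.pi fun _ => Ioi 0) ×ˢ (Set.univ.pi fun _ => Ioi 0) := by
  ext p; simp [orth, Set.mem_pi]

lemma measurableSet_orth (N M : ℕ) : MeasurableSet (orth N M) := by
  rw [orth_eq]
  exact (MeasurableSet.univ_pi fun _ => measurableSet_Ioi).prod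
    (MeasurableSet.univ_pi fun _ => measurableSet_Ioi)

lemma restrict_orth (N M : ℕ) : (volume : Measure ((Fin N → ℝ) × (Fin M → ℝ))).restrict (orth N M) =
    (Measure.pi fun _ => (volume : Measure ℝ).restrict (Ioi 0)).prod
      (Measure.pi fun _ => (volume : Measure ℝ).restrict (Ioi 0)) := by
  rw [← Measure.restrict_pi_pi, ← Measure.restrict_pi_pi, Measure.prod_restrict, orth_eq]
  rfl

lemma integrableOn_orth_prod {N M : ℕ} {g h : ℝ → ℝ} (hg : IntegrableOn g (Ioi 0))
    (hh : IntegrableOn h (Ioi 0)) :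
    IntegrableOn (fun p : (Fin N → ℝ) × (Fin M → ℝ) => (∏ i, g (p.1 i)) * ∏ j, h (p.2 j))
      (orth N M) := by
  rw [IntegrableOn, restrict_orth]
  exact (Integrable.fintype_prod (fun _ : Fin N => hg)).mul_prod
    (Integrable.fintype_prod (fun _ : Fin M => hh))

lemma integral_Ioi_deriv_eq_zero {φ φ' : ℝ → ℂ}
    (hd : ∀ t ∈ Ioi (0:ℝ), HasDerivAt φ (φ' t) t)
    (h1 : IntegrableOn φ (Ioi 0)) (h2 : IntegrableOn φ' (Ioi 0))
    (h0 : Tendsto φ (𝓝[>] 0) (𝓝 0)) : ∫ t in Ioi 0, φ' t = 0 := by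
  have hinf := tendsto_zero_of_hasDerivAt_of_integrableOn_Ioi hd h2 h1
  have := integral_Ioi_of_hasDerivAt_of_tendsto (a := 0) (f := Function.update φ 0 0) (f' := φ')
    (m := 0) ?_ ?_ h2 ?_
  · simpa using this
  · exact continuousWithinAt_update_same.2 (by simpa using h0)
  · intro t ht
    refine (hd t ht).congr_of_eventuallyEq ?_
    filter_upwards [lt_mem_nhds (show (0:ℝ) < t from ht)] with s hs
    simp [Function.update_of_ne hs.ne']
  · refine hinf.congr' ?_
    filter_upwards [Ioi_mem_atTop (0:ℝ)] with s hs
    have hs : (0:ℝ) < s := hs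
    simp [Function.update_of_ne hs.ne']

/-- Integration by parts in one coordinate: no boundary term arises, because the slices of `F`
tend to `0` at the wall `x i = 0`, while integrability of `F` and of its derivative forces decay
at infinity. -/
lemma integral_orth_deriv_eq_zero {N M : ℕ} (i : Fin N)
    {F F' : (Fin N → ℝ) × (Fin M → ℝ) → ℂ}
    (hF : IntegrableOn F (orth N M)) (hF' : IntegrableOn F' (orth N M))
    (hd : ∀ p ∈ orth N M,
      HasDerivAt (fun t => F (Function.update p.1 i t, p.2)) (F' p) (p.1 i))
    (h0 : ∀ p ∈ orth N M,
      Tendsto (fun t => F (Function.update p.1 i t, p.2)) (𝓝[>] 0) (𝓝 0)) :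
    ∫ p in orth N M, F' p = 0 := by
  obtain _ | n := N
  · exact i.elim0
  let e₁ : ℝ × ((Fin n → ℝ) × (Fin M → ℝ)) ≃ᵐ (ℝ × (Fin n → ℝ)) × (Fin M → ℝ) :=
    MeasurableEquiv.prodAssoc.symm
  let e₂ : (ℝ × (Fin n → ℝ)) × (Fin M → ℝ) ≃ᵐ (Fin (n+1) → ℝ) × (Fin M → ℝ) :=
    (MeasurableEquiv.piFinSuccAbove (fun _ => ℝ) i).symm.prodCongr (MeasurableEquiv.refl _)
  let e := e₁.trans e₂
  have hmp : MeasurePreserving e volume volume := by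
    refine MeasurePreserving.trans (e := e₁) (e' := e₂) volume_preserving_prodAssoc.symm ?_
    exact ((volume_preserving_piFinSuccAbove (fun _ => ℝ) i).symm).prod (MeasurePreserving.id _)
  have he : ∀ t q, e (t, q) = (Fin.insertNth i t q.1, q.2) := fun t q => rfl
  have hpre : e ⁻¹' (orth (n+1) M) = Ioi 0 ×ˢ orth n M := by
    ext ⟨t, q⟩
    simp only [mem_preimage, he, orth, mem_ofPred_eq, mem_prod, mem_Ioi, i.forall_iff_succAbove,
      Fin.insertNth_apply_same, Fin.insertNth_apply_succAbove, and_assoc]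
  have key : ∀ G : (Fin (n+1) → ℝ) × (Fin M → ℝ) → ℂ, IntegrableOn G (orth (n+1) M) →
      Integrable (fun z => G (e z))
        (((volume : Measure ℝ).restrict (Ioi 0)).prod (volume.restrict (orth n M))) := by
    intro G hG
    rw [Measure.prod_restrict, ← hpre]
    exact (hmp.integrableOn_comp_preimage e.measurableEmbedding).2 hG
  have h1 := key F hF
  have h2 := key F' hF'
  rw [← hmp.setIntegral_preimage_emb e.measurableEmbedding, hpre, Measure.volume_eq_prod,
    ← Measure.prod_restrict, integral_prod_symm _ h2]
  refine integral_eq_zero_of_ae ?_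
  filter_upwards [h1.prod_left_ae, h2.prod_left_ae, ae_restrict_mem (measurableSet_orth n M)]
    with q hq1 hq2 hq
  have hmem : ∀ t : ℝ, 0 < t → e (t, q) ∈ orth (n+1) M := fun t ht => by
    have : (t, q) ∈ e ⁻¹' (orth (n+1) M) := by rw [hpre]; exact ⟨ht, hq⟩
    exact this
  refine integral_Ioi_deriv_eq_zero (φ := fun t => F (e (t, q))) (fun t ht => ?_) hq1 hq2 ?_
  · have := hd _ (hmem t ht)
    simpa only [he, Fin.update_insertNth, Fin.insertNth_apply_same] using this
  · have := h0 _ (hmem 1 one_pos)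
    simpa only [he, Fin.update_insertNth] using this

/-! ### Integrability in one variable -/

/-- The leading coefficient is positive, so the exponential weight beats every power of `1 + x`
with an exponential rate to spare. -/
lemma exists_poly_bound {d : ℕ} (hd : 1 ≤ d) {t : ℕ → ℝ} (ht : 0 < t d) {κ : ℝ} (hκ : 0 < κ)
    (K : ℕ) : ∃ C ε : ℝ, 0 < ε ∧ ∀ x : ℝ, 0 ≤ x →
      (1 + x) ^ K * Real.exp (-κ * ∑ k ∈ Finset.Icc 1 d, t k * x ^ k) ≤
        C * Real.exp (-ε * x) := by
  set P : ℝ → ℝ := fun x => ∑ k ∈ Finset.Icc 1 d, t k * x ^ k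
  have hlim : Tendsto (fun x => P x / x ^ d) atTop (𝓝 (t d)) := by
    have : Tendsto (fun x : ℝ => ∑ k ∈ Finset.Icc 1 d, t k * (x ^ k / x ^ d)) atTop
        (𝓝 (∑ k ∈ Finset.Icc 1 d, t k * (if k = d then 1 else 0))) := by
      refine tendsto_finsetSum _ fun k hk => Tendsto.const_mul _ ?_
      split_ifs with h
      · subst h
        refine tendsto_const_nhds.congr' ?_
        filter_upwards [eventually_gt_atTop (0:ℝ)] with x hx
        rw [div_self (by positivity)]
      · exact tendsto_pow_div_pow_atTop_zero (lt_of_le_of_ne (Finset.mem_Icc.1 hk).2 h)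
    have h2 : ∑ k ∈ Finset.Icc 1 d, t k * (if k = d then (1:ℝ) else 0) = t d := by
      simp [hd]
    rw [h2] at this
    refine this.congr fun x => ?_
    simp only [P, Finset.sum_div, mul_div_assoc]
  set ε : ℝ := κ * (t d / 2) / 2 with hε
  have hε0 : 0 < ε := by positivity
  have hev : ∀ᶠ x : ℝ in atTop, 2 * ε * x ≤ κ * P x := by
    filter_upwards [hlim.eventually (lt_mem_nhds (half_lt_self ht)), eventually_ge_atTop (1:ℝ)]
      with x hx hx1
    have hxd : 0 < x ^ d := by positivity
    rw [lt_div_iff₀ hxd] at hx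
    have : x ≤ x ^ d := le_self_pow₀ hx1 (by omega)
    have h3 : t d / 2 * x ≤ P x := by nlinarith
    rw [hε]; nlinarith
  have hO : ∃ C, ∀ᶠ x : ℝ in atTop, (1 + x) ^ K * Real.exp (-ε * x) ≤ C := by
    have h := (Real.tendsto_pow_mul_exp_neg_atTop_nhds_zero K).comp
      ((tendsto_atTop_add_const_left atTop 1 tendsto_id).const_mul_atTop hε0)
    refine ⟨ε⁻¹ ^ K * Real.exp ε * 1, ?_⟩
    filter_upwards [h.eventually (gt_mem_nhds one_pos)] with x hx
    have e1 : (1 + x) ^ K * Real.exp (-ε * x) = ε⁻¹ ^ K * Real.exp ε *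
        ((ε * (1 + x)) ^ K * Real.exp (-(ε * (1 + x)))) := by
      rw [mul_pow, inv_pow, show -ε * x = ε + (-(ε * (1 + x))) by ring, Real.exp_add]
      field_simp
    rw [e1]
    have hx' : (ε * (1 + x)) ^ K * Real.exp (-(ε * (1 + x))) < 1 := hx
    gcongr
  obtain ⟨C, hC⟩ := hO
  obtain ⟨x₀, hx₀⟩ := eventually_atTop.1 (hev.and hC)
  have hcont : Continuous fun x => (1 + x) ^ K * Real.exp (-κ * P x) * Real.exp (ε * x) := by
    fun_prop
  obtain ⟨C', hC'⟩ := (isCompact_Icc (a := (0:ℝ)) (b := x₀)).bddAbove_image hcont.continuousOn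
  refine ⟨max C C', ε, hε0, fun x hx => ?_⟩
  have : (1 + x) ^ K * Real.exp (-κ * P x) * Real.exp (ε * x) ≤ max C C' := by
    rcases le_total x x₀ with h | h
    · exact (hC' ⟨x, ⟨hx, h⟩, rfl⟩).trans (le_max_right _ _)
    · obtain ⟨h1, h2⟩ := hx₀ x h
      refine le_trans ?_ (h2.trans (le_max_left _ _))
      rw [mul_assoc, ← Real.exp_add]
      gcongr
      linarith
  calc _ = ((1 + x) ^ K * Real.exp (-κ * P x) * Real.exp (ε * x)) * Real.exp (-ε * x) := by
        rw [mul_assoc _ (Real.exp (ε * x)), ← Real.exp_add]; simp [P]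
    _ ≤ _ := by gcongr

lemma integrableOn_one_var {d : ℕ} (hd : 1 ≤ d) {t : ℕ → ℝ} (ht : 0 < t d) {κ : ℝ} (hκ : 0 < κ)
    (K : ℕ) {s : ℝ} (hs : -1 < s) :
    IntegrableOn (fun x : ℝ => x ^ s *
      ((1 + x) ^ K * Real.exp (-κ * ∑ k ∈ Finset.Icc 1 d, t k * x ^ k))) (Ioi 0) := by
  obtain ⟨C, ε, hε, hC⟩ := exists_poly_bound hd ht hκ K
  have h := (integrableOn_rpow_mul_exp_neg_mul_rpow hs one_pos hε).const_mul C
  refine Integrable.mono' h (by measurability) ?_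
  filter_upwards [ae_restrict_mem measurableSet_Ioi] with x hx
  have hx : (0:ℝ) < x := hx
  rw [Real.norm_of_nonneg (by positivity), Real.rpow_one]
  refine (mul_le_mul_of_nonneg_left (hC x hx.le) (by positivity)).trans_eq ?_
  ring


/-! ### Vandermonde products and the Cauchy determinant -/

/-- The Vandermonde product. -/
def vand {N : ℕ} (x : Fin N → ℝ) : ℝ := ∏ i : Fin N, ∏ j ∈ Finset.Ioi i, (x j - x i)

lemma abs_vand_comp {N : ℕ} (x : Fin N → ℝ) (σ : Equiv.Perm (Fin N)) :
    |vand (x ∘ σ)| = |vand x| := by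
  have h : ∀ x : Fin N → ℝ, vand x = (Matrix.vandermonde x).det := fun x =>
    (Matrix.det_vandermonde x).symm
  have h2 : Matrix.vandermonde (x ∘ σ) = (Matrix.vandermonde x).submatrix σ id := by
    ext i j; simp [Matrix.vandermonde]
  rw [h, h, h2, Matrix.det_permute, abs_mul]
  rcases Int.units_eq_one_or (Equiv.Perm.sign σ) with h | h <;> simp [h]

lemma cauchy_bound_of_monotone {N : ℕ} {x y : Fin N → ℝ} (hx : ∀ i, 0 < x i) (hy : ∀ i, 0 < y i)
    (mx : Monotone x) (my : Monotone y) :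
    |vand x| * |vand y| * ∏ i, ∏ j, (x i + y j)⁻¹ ≤ ∏ i, (x i + y i)⁻¹ := by
  have e1 : ∏ i, ∏ j, (x i + y j)⁻¹ = (∏ i, (x i + y i)⁻¹) *
      ∏ i, ∏ j ∈ Finset.Ioi i, ((x j + y i)⁻¹ * (x i + y j)⁻¹) := by
    rw [Finset.prod_prod_Ioi_mul_eq_prod_prod_off_diag fun a b => (x a + y b)⁻¹,
      ← Finset.prod_mul_distrib, Finset.prod_comm]
    refine Finset.prod_congr rfl fun i _ => ?_
    exact Fintype.prod_eq_mul_prod_compl i fun k => (x k + y i)⁻¹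
  rw [e1, vand, vand, Finset.abs_prod, Finset.abs_prod, mul_left_comm]
  refine mul_le_of_le_one_right (Finset.prod_nonneg fun i _ =>
    inv_nonneg.2 (add_pos (hx i) (hy i)).le) ?_
  simp only [Finset.abs_prod, ← Finset.prod_mul_distrib]
  refine Finset.prod_le_one (fun i _ => Finset.prod_nonneg fun j _ => ?_) fun i _ =>
    Finset.prod_le_one (fun j _ => ?_) fun j hj => ?_
  · have := hx i; have := hx j; have := hy i; have := hy j; positivity
  · have := hx i; have := hx j; have := hy i; have := hy j; positivity
  · have h1 := hx i; have h2 := hx j; have h3 := hy i; have h4 := hy j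
    have hij : i ≤ j := (Finset.mem_Ioi.1 hj).le
    have h5 := mx hij
    have h6 := my hij
    rw [abs_of_nonneg (by linarith), abs_of_nonneg (by linarith), ← mul_inv, ← div_eq_mul_inv,
      div_le_one (by positivity)]
    exact mul_le_mul (by linarith) (by linarith) (by linarith) (by linarith)

/-- Weighted arithmetic-geometric mean inequality, with `θ x + (1 - θ) y ≤ x + y`. -/
lemma inv_add_le_rpow {x y θ : ℝ} (hx : 0 < x) (hy : 0 < y) (h0 : 0 ≤ θ) (h1 : θ ≤ 1) :
    (x + y)⁻¹ ≤ x ^ (-θ) * y ^ (-(1 - θ)) := by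
  rw [Real.rpow_neg hx.le, Real.rpow_neg hy.le, ← mul_inv]
  refine inv_anti₀ (by positivity) ?_
  refine (Real.geom_mean_le_arith_mean2_weighted h0 (by linarith : (0:ℝ) ≤ 1 - θ) hx.le hy.le
    (by ring)).trans ?_
  nlinarith

/-- A pointwise bound on the Cauchy determinant `Δ(x) Δ(y) / ∏ (x i + y j)`. After sorting both
families, `x j - x i ≤ x j + y i` and `y j - y i ≤ x i + y j` for `i < j`, so only the diagonal
factors `1 / (x i + y i)` survive. -/
lemma cauchy_bound {N : ℕ} {x y : Fin N → ℝ} (hx : ∀ i, 0 < x i) (hy : ∀ i, 0 < y i)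
    {θ : ℝ} (h0 : 0 ≤ θ) (h1 : θ ≤ 1) :
    |vand x| * |vand y| * ∏ i, ∏ j, (x i + y j)⁻¹ ≤
      (∏ i, x i ^ (-θ)) * ∏ j, y j ^ (-(1 - θ)) := by
  set σ := Tuple.sort x
  set τ := Tuple.sort y
  have e1 : ∏ i, ∏ j, (x i + y j)⁻¹ = ∏ i, ∏ j, ((x ∘ σ) i + (y ∘ τ) j)⁻¹ := by
    rw [← Equiv.prod_comp σ]
    refine Finset.prod_congr rfl fun i _ => ?_
    rw [← Equiv.prod_comp τ]; rfl
  rw [e1, ← abs_vand_comp x σ, ← abs_vand_comp y τ, ← Equiv.prod_comp σ fun i => x i ^ (-θ),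
    ← Equiv.prod_comp τ fun i => y i ^ (-(1-θ)), ← Finset.prod_mul_distrib]
  refine (cauchy_bound_of_monotone (fun i => hx _) (fun i => hy _) (Tuple.monotone_sort x)
    (Tuple.monotone_sort y)).trans ?_
  exact Finset.prod_le_prod (fun i _ => inv_nonneg.2 (add_pos (hx _) (hy _)).le)
    fun i _ => inv_add_le_rpow (hx _) (hy _) h0 h1

lemma one_le_prod' {ι : Type*} (s : Finset ι) (f : ι → ℝ) (h : ∀ k ∈ s, 1 ≤ f k) :
    1 ≤ ∏ k ∈ s, f k :=
  Finset.prod_induction f (fun r => 1 ≤ r) (fun _ _ => one_le_mul_of_one_le_of_one_le) le_rfl h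

lemma abs_prod_le_pow {ι : Type*} (s : Finset ι) (f : ι → ℝ) {c : ℝ}
    (hf : ∀ i ∈ s, |f i| ≤ c) : |∏ k ∈ s, f k| ≤ c ^ s.card := by
  rw [Finset.abs_prod, ← Finset.prod_const]
  exact Finset.prod_le_prod (fun _ _ => abs_nonneg _) hf

lemma abs_sub_le_prod {N : ℕ} {x : Fin N → ℝ} (hx : ∀ i, 0 < x i) (i j : Fin N) :
    |x j - x i| ≤ ∏ k, (1 + x k) := by
  have h : ∀ i, 1 + x i ≤ ∏ k, (1 + x k) := fun i => by
    rw [← Finset.mul_prod_erase _ _ (Finset.mem_univ i)]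
    refine le_mul_of_one_le_right (by linarith [hx i]) ?_
    exact one_le_prod' _ _ fun k _ => by linarith [hx k]
  rw [abs_le]
  constructor <;> linarith [h i, h j, hx i, hx j]

lemma prod_div_le {ι : Type*} (s : Finset ι) (f : ι → ℝ) {c : ℝ} (hc : 1 ≤ c)
    (hf : ∀ i ∈ s, |f i| ≤ c) {i : ι} (hi : i ∈ s) : |(∏ k ∈ s, f k) / f i| ≤ c ^ s.card := by
  classical
  rw [← Finset.mul_prod_erase _ _ hi]
  by_cases h : f i = 0
  · simp [h]; positivity
  · rw [mul_div_cancel_left₀ _ h]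
    refine (abs_prod_le_pow _ _ fun k hk => hf k (Finset.mem_of_mem_erase hk)).trans ?_
    exact pow_le_pow_right₀ hc (Finset.card_le_card (Finset.erase_subset _ _))

lemma one_le_prod_one_add {N : ℕ} {x : Fin N → ℝ} (hx : ∀ i, 0 < x i) : 1 ≤ ∏ k, (1 + x k) :=
  one_le_prod' _ _ fun k _ => by linarith [hx k]

lemma card_pairs_le (N : ℕ) :
    ((Finset.univ : Finset (Fin N)).sigma fun i => Finset.Ioi i).card ≤ N ^ 2 := by
  rw [Finset.card_sigma]
  calc _ ≤ ∑ _i : Fin N, N := Finset.sum_le_sum fun i _ => by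
        simpa using Finset.card_le_univ (Finset.Ioi i)
    _ = N ^ 2 := by simp [sq]

/-- The pole `1 / (x b - x a)` cancels against one factor of the Vandermonde product; when
`x b = x a` the quotient is `0`. -/
lemma abs_vand_div_le {N : ℕ} {x : Fin N → ℝ} (hx : ∀ i, 0 < x i) {a b : Fin N} (hab : a < b) :
    |vand x / (x b - x a)| ≤ ∏ k, (1 + x k) ^ (N ^ 2) := by
  rw [Finset.prod_pow, vand, Finset.prod_sigma']
  refine (prod_div_le _ (fun s : (_ : Fin N) × Fin N => x s.2 - x s.1) (one_le_prod_one_add hx)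
    (fun s _ => abs_sub_le_prod hx _ _) (i := ⟨a, b⟩) (by simpa using hab)).trans ?_
  exact pow_le_pow_right₀ (one_le_prod_one_add hx) (card_pairs_le N)

lemma abs_vand_le {N : ℕ} {x : Fin N → ℝ} (hx : ∀ i, 0 < x i) :
    |vand x| ≤ ∏ k, (1 + x k) ^ (N ^ 2) := by
  rw [Finset.prod_pow, vand, Finset.prod_sigma']
  refine (abs_prod_le_pow _ _ fun s _ => abs_sub_le_prod hx s.1 s.2).trans ?_
  exact pow_le_pow_right₀ (one_le_prod_one_add hx) (card_pairs_le N)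


/-! ### The weight and its integrable majorant -/

/-- The potential `-a log x + ∑ t_k x^k`. -/
noncomputable def pot (a : ℝ) (d : ℕ) (t : ℕ → ℝ) (x : ℝ) : ℝ :=
  -a * Real.log x + ∑ k ∈ Finset.Icc 1 d, t k * x ^ k

/-- The derivative of the potential, on `(0,∞)`. -/
noncomputable def dpot (a : ℝ) (d : ℕ) (t : ℕ → ℝ) (x : ℝ) : ℝ :=
  -a / x + ∑ k ∈ Finset.Icc 1 d, k * t k * x ^ (k - 1)

/-- The Cauchy eigenvalue weight, with the exponential split into one factor per eigenvalue. -/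
noncomputable def wt {N : ℕ} (κ : ℝ) (V₁ V₂ : ℝ → ℝ) (p : (Fin N → ℝ) × (Fin N → ℝ)) : ℝ :=
  vand p.1 ^ 2 * vand p.2 ^ 2 * (∏ i, Real.exp (-κ * V₁ (p.1 i))) *
    (∏ j, Real.exp (-κ * V₂ (p.2 j))) * ∏ i, ∏ j, (p.1 i + p.2 j)⁻¹

/-- A majorant of the weight that factorises over the eigenvalues. -/
noncomputable def maj {N : ℕ} (κ θ : ℝ) (V₁ V₂ : ℝ → ℝ) (p : (Fin N → ℝ) × (Fin N → ℝ)) : ℝ :=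
  (∏ i, ((1 + p.1 i) ^ (N ^ 2) * p.1 i ^ (-θ) * Real.exp (-κ * V₁ (p.1 i)))) *
    ∏ j, ((1 + p.2 j) ^ (N ^ 2) * p.2 j ^ (-(1 - θ)) * Real.exp (-κ * V₂ (p.2 j)))

/-- The growth function `∏ (1 + x_k)^d / x_k` against which observables are compared. -/
noncomputable def growth {N M : ℕ} (d : ℕ) (p : (Fin N → ℝ) × (Fin M → ℝ)) : ℝ :=
  ∏ i, ((1 + p.1 i) ^ d / p.1 i)

/-- The factor `r` is either `1` or `1 / (x b - x a)`: one of the two copies of `Δ(x)` absorbs the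
pole, and the other one goes into the Cauchy determinant. -/
lemma abs_wt_mul_le {N : ℕ} {κ θ : ℝ} (h0 : 0 ≤ θ) (h1 : θ ≤ 1) {V₁ V₂ : ℝ → ℝ}
    {p : (Fin N → ℝ) × (Fin N → ℝ)} (hp : p ∈ orth N N) {r : ℝ}
    (hr : |vand p.1 * r| ≤ ∏ k, (1 + p.1 k) ^ (N ^ 2)) :
    |wt κ V₁ V₂ p * r| ≤ maj κ θ V₁ V₂ p := by
  obtain ⟨hx, hy⟩ := hp
  have e : wt κ V₁ V₂ p * r = (vand p.1 * r) * (vand p.1 * vand p.2 * ∏ i, ∏ j, (p.1 i + p.2 j)⁻¹)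
      * vand p.2 * ((∏ i, Real.exp (-κ * V₁ (p.1 i))) * (∏ j, Real.exp (-κ * V₂ (p.2 j)))) := by
    rw [wt]; ring
  have hc : 0 ≤ ∏ i, ∏ j, (p.1 i + p.2 j)⁻¹ := Finset.prod_nonneg fun i _ =>
    Finset.prod_nonneg fun j _ => inv_nonneg.2 (add_pos (hx i) (hy j)).le
  have hE : 0 ≤ (∏ i, Real.exp (-κ * V₁ (p.1 i))) * (∏ j, Real.exp (-κ * V₂ (p.2 j))) := by
    positivity
  have e2 : maj κ θ V₁ V₂ p = (∏ k, (1 + p.1 k) ^ (N ^ 2)) *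
      ((∏ i, p.1 i ^ (-θ)) * ∏ j, p.2 j ^ (-(1 - θ))) * (∏ k, (1 + p.2 k) ^ (N ^ 2)) *
      ((∏ i, Real.exp (-κ * V₁ (p.1 i))) * (∏ j, Real.exp (-κ * V₂ (p.2 j)))) := by
    simp only [maj, Finset.prod_mul_distrib]; ring
  have hb := cauchy_bound hx hy h0 h1
  have h2 := abs_vand_le hy
  rw [e, e2, abs_mul, abs_mul, abs_mul, abs_mul (vand p.1 * vand p.2),
    abs_mul (vand p.1) (vand p.2), abs_of_nonneg hc, abs_of_nonneg hE]
  have := (abs_nonneg _).trans hr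
  have := (abs_nonneg _).trans h2
  have : 0 ≤ (∏ i, p.1 i ^ (-θ)) * ∏ j, p.2 j ^ (-(1 - θ)) := le_trans (by positivity) hb
  gcongr

/-- Near `0` the integrand behaves like `x ^ (-1 - θ + κ a₁)` in each `x i` and like
`y ^ (-1 + θ + κ a₂)` in each `y j`, whence the two conditions on `θ`. -/
lemma integrableOn_growth_mul_maj {N : ℕ} {κ a₁ a₂ θ : ℝ} (hκ : 0 < κ) {d₁ d₂ : ℕ} (hd₁ : 1 ≤ d₁)
    (hd₂ : 1 ≤ d₂) {t₁ t₂ : ℕ → ℝ} (ht₁ : 0 < t₁ d₁) (ht₂ : 0 < t₂ d₂) (d : ℕ)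
    (hθ1 : θ < κ * a₁) (hθ2 : 0 < θ + κ * a₂) :
    IntegrableOn (fun p : (Fin N → ℝ) × (Fin N → ℝ) =>
      growth d p * maj κ θ (pot a₁ d₁ t₁) (pot a₂ d₂ t₂) p) (orth N N) := by
  have i1 := integrableOn_one_var hd₁ ht₁ hκ (d + N ^ 2) (s := -1 + -θ + κ * a₁) (by linarith)
  have i2 := integrableOn_one_var hd₂ ht₂ hκ (N ^ 2) (s := -(1 - θ) + κ * a₂) (by linarith)
  have hexp : ∀ (a : ℝ) (d : ℕ) (t : ℕ → ℝ) (x : ℝ), 0 < x → Real.exp (-κ * pot a d t x) =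
      x ^ (κ * a) * Real.exp (-κ * ∑ k ∈ Finset.Icc 1 d, t k * x ^ k) := by
    intro a d t x hx
    rw [Real.rpow_def_of_pos hx, ← Real.exp_add, pot]
    congr 1
    ring
  refine (integrableOn_orth_prod i1 i2).congr_fun (fun p hp => ?_) (measurableSet_orth N N)
  obtain ⟨hx, hy⟩ := hp
  have e : ∀ A : ℝ, ∀ f g : Fin N → ℝ, (∏ i, f i) * ((∏ i, g i) * A) = (∏ i, f i * g i) * A := by
    intro A f g
    rw [← mul_assoc, ← Finset.prod_mul_distrib]
  simp only [growth, maj]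
  rw [e]
  refine congrArg₂ (· * ·) (Finset.prod_congr rfl fun i _ => ?_)
    (Finset.prod_congr rfl fun i _ => ?_)
  · rw [hexp _ _ _ _ (hx i), Real.rpow_add (hx i), Real.rpow_add (hx i), Real.rpow_neg_one, pow_add]
    ring
  · rw [hexp _ _ _ _ (hy i), Real.rpow_add (hy i)]
    ring

lemma measurable_vand {N : ℕ} : Measurable (vand : (Fin N → ℝ) → ℝ) := by
  unfold vand; fun_prop

lemma measurable_pot (a : ℝ) (d : ℕ) (t : ℕ → ℝ) : Measurable (pot a d t) := by
  unfold pot; fun_prop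

lemma measurable_wt {N : ℕ} (κ : ℝ) {V₁ V₂ : ℝ → ℝ} (h1 : Measurable V₁) (h2 : Measurable V₂) :
    Measurable (wt (N := N) κ V₁ V₂) := by
  have := measurable_vand (N := N)
  unfold wt; fun_prop

/-! ### Dominated observables -/

/-- Measurable observables bounded on the orthant. -/
def Bdd {N M : ℕ} (h : (Fin N → ℝ) × (Fin M → ℝ) → ℂ) : Prop :=
  Measurable h ∧ ∃ C, ∀ p ∈ orth N M, ‖h p‖ ≤ C

/-- Measurable observables bounded on the orthant by a multiple of `growth d`. -/
def Dom {N M : ℕ} (d : ℕ) (h : (Fin N → ℝ) × (Fin M → ℝ) → ℂ) : Prop :=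
  Measurable h ∧ ∃ C, ∀ p ∈ orth N M, ‖h p‖ ≤ C * growth d p

section
variable {N M d : ℕ} {h h' : (Fin N → ℝ) × (Fin M → ℝ) → ℂ}

lemma one_le_factor (hd : 1 ≤ d) {x : ℝ} (hx : 0 < x) : 1 ≤ (1 + x) ^ d / x := by
  rw [one_le_div hx]
  exact le_trans (by linarith) (le_self_pow₀ (by linarith) (by omega))

lemma one_le_growth (hd : 1 ≤ d) {p : (Fin N → ℝ) × (Fin M → ℝ)} (hp : p ∈ orth N M) :
    1 ≤ growth d p :=
  one_le_prod' _ _ fun k _ => one_le_factor hd (hp.1 k)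

lemma factor_le_growth (hd : 1 ≤ d) {p : (Fin N → ℝ) × (Fin M → ℝ)} (hp : p ∈ orth N M)
    (i : Fin N) : (1 + p.1 i) ^ d / p.1 i ≤ growth d p := by
  rw [growth, ← Finset.mul_prod_erase _ _ (Finset.mem_univ i)]
  have := one_le_factor hd (hp.1 i)
  exact le_mul_of_one_le_right (by linarith)
    (one_le_prod' _ _ fun k _ => one_le_factor hd (hp.1 k))

lemma Bdd.dom (hd : 1 ≤ d) (hb : Bdd h) : Dom d h := by
  obtain ⟨hm, C, hC⟩ := hb
  refine ⟨hm, |C|, fun p hp => (hC p hp).trans ((le_abs_self C).trans ?_)⟩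
  exact le_mul_of_one_le_right (abs_nonneg C) (one_le_growth hd hp)

lemma bdd_const (c : ℂ) : Bdd (fun _ : (Fin N → ℝ) × (Fin M → ℝ) => c) :=
  ⟨measurable_const, ‖c‖, fun _ _ => le_rfl⟩

lemma Bdd.mul (hb : Bdd h) (hb' : Bdd h') : Bdd fun p => h p * h' p := by
  obtain ⟨hm, C, hC⟩ := hb
  obtain ⟨hm', C', hC'⟩ := hb'
  refine ⟨hm.mul hm', C * C', fun p hp => ?_⟩
  rw [norm_mul]
  exact mul_le_mul (hC p hp) (hC' p hp) (norm_nonneg _) ((norm_nonneg _).trans (hC p hp))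

lemma Bdd.mul_dom (hb : Bdd h) (hb' : Dom d h') : Dom d fun p => h p * h' p := by
  obtain ⟨hm, C, hC⟩ := hb
  obtain ⟨hm', C', hC'⟩ := hb'
  refine ⟨hm.mul hm', C * C', fun p hp => ?_⟩
  rw [norm_mul, mul_assoc]
  exact mul_le_mul (hC p hp) (hC' p hp) (norm_nonneg _) ((norm_nonneg _).trans (hC p hp))

lemma Dom.add (hb : Dom d h) (hb' : Dom d h') : Dom d fun p => h p + h' p := by
  obtain ⟨hm, C, hC⟩ := hb
  obtain ⟨hm', C', hC'⟩ := hb'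
  refine ⟨hm.add hm', C + C', fun p hp => (norm_add_le _ _).trans ?_⟩
  rw [add_mul]
  exact add_le_add (hC p hp) (hC' p hp)

lemma Dom.neg (hb : Dom d h) : Dom d fun p => - h p :=
  ⟨hb.1.neg, hb.2.imp fun C hC p hp => by rw [norm_neg]; exact hC p hp⟩

lemma Dom.sub (hb : Dom d h) (hb' : Dom d h') : Dom d fun p => h p - h' p := by
  simpa only [sub_eq_add_neg] using hb.add hb'.neg

lemma Dom.sum {ι : Type*} (s : Finset ι) {f : ι → (Fin N → ℝ) × (Fin M → ℝ) → ℂ}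
    (hf : ∀ i ∈ s, Dom d (f i)) : Dom d fun p => ∑ i ∈ s, f i p := by
  classical
  induction s using Finset.induction_on with
  | empty => exact ⟨by simp, 0, fun p _ => by simp⟩
  | insert a s ha ih =>
    simp only [Finset.sum_insert ha]
    exact (hf a (by simp)).add (ih fun i hi => hf i (by simp [hi]))

lemma dom_dpot (hd : 1 ≤ d) (a : ℝ) (t : ℕ → ℝ) (i : Fin N) :
    Dom d (fun p : (Fin N → ℝ) × (Fin M → ℝ) => ((dpot a d t (p.1 i) : ℝ) : ℂ)) := by
  refine ⟨by unfold dpot; fun_prop, |a| + ∑ k ∈ Finset.Icc 1 d, |k * t k|, fun p hp => ?_⟩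
  have hx := hp.1 i
  refine le_trans ?_ (mul_le_mul_of_nonneg_left (factor_le_growth hd hp i) (by positivity))
  set x := p.1 i
  rw [Complex.norm_real, Real.norm_eq_abs, dpot, add_mul, Finset.sum_mul]
  refine (abs_add_le _ _).trans (add_le_add ?_ ((Finset.abs_sum_le_sum_abs _ _).trans
    (Finset.sum_le_sum fun k hk => ?_)))
  · rw [abs_div, abs_neg, abs_of_pos hx, div_eq_mul_one_div]
    gcongr
    exact one_le_pow₀ (by linarith)
  · rw [abs_mul, abs_of_nonneg (by positivity : (0:ℝ) ≤ x ^ (k - 1))]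
    obtain ⟨h1, h2⟩ := Finset.mem_Icc.1 hk
    refine mul_le_mul_of_nonneg_left ?_ (abs_nonneg _)
    rw [le_div_iff₀ hx, ← pow_succ, Nat.sub_add_cancel h1]
    calc x ^ k ≤ (1 + x) ^ k := by gcongr; linarith
      _ ≤ (1 + x) ^ d := pow_le_pow_right₀ (by linarith) h2

lemma dom_inv_add (hd : 1 ≤ d) (i : Fin N) (j : Fin M) :
    Dom d (fun p : (Fin N → ℝ) × (Fin M → ℝ) => ((p.1 i : ℂ) + (p.2 j : ℂ))⁻¹) := by
  refine ⟨by fun_prop, 1, fun p hp => ?_⟩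
  have hx := hp.1 i
  have hy := hp.2 j
  rw [one_mul]
  refine le_trans ?_ (factor_le_growth hd hp i)
  change ‖((p.1 i : ℂ) + (p.2 j : ℂ))⁻¹‖ ≤ _
  rw [← Complex.ofReal_add, ← Complex.ofReal_inv, Complex.norm_real,
    Real.norm_of_nonneg (by positivity), inv_eq_one_div]
  gcongr
  · exact one_le_pow₀ (by linarith)
  · linarith

lemma bdd_inv_sub {ξ : ℂ} (hξ : ∀ r : ℝ, 0 ≤ r → ξ ≠ (r : ℂ)) (i : Fin N) :
    Bdd (fun p : (Fin N → ℝ) × (Fin M → ℝ) => (ξ - (p.1 i : ℂ))⁻¹) := by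
  refine ⟨by fun_prop, (Metric.infDist ξ (Complex.ofReal '' Ici 0))⁻¹, fun p hp => ?_⟩
  have hc : IsClosed (Complex.ofReal '' Ici (0:ℝ)) :=
    Complex.isometry_ofReal.isClosedEmbedding.isClosedMap _ isClosed_Ici
  have hpos : 0 < Metric.infDist ξ (Complex.ofReal '' Ici 0) := by
    refine (hc.notMem_iff_infDist_pos ⟨_, 0, by simp, rfl⟩).1 ?_
    rintro ⟨r, hr, h⟩
    exact hξ r hr h.symm
  rw [norm_inv]
  refine inv_anti₀ hpos ?_
  rw [← dist_eq_norm]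
  exact Metric.infDist_le_dist_of_mem ⟨_, (hp.1 i).le, rfl⟩
end

/-- Integrability of a dominated observable against a function bounded by the majorant. -/
lemma Dom.integrableOn {N d : ℕ} {h : (Fin N → ℝ) × (Fin N → ℝ) → ℂ}
    {v A : (Fin N → ℝ) × (Fin N → ℝ) → ℝ}
    (hh : Dom d h) (hv : Measurable v) (hA : ∀ p ∈ orth N N, |v p| ≤ A p)
    (hi : IntegrableOn (fun p => growth d p * A p) (orth N N)) :
    IntegrableOn (fun p => h p * (v p : ℂ)) (orth N N) := by
  obtain ⟨hm, C, hC⟩ := hh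
  refine Integrable.mono' (hi.const_mul C) (hm.mul
    (Complex.measurable_ofReal.comp hv)).aestronglyMeasurable ?_
  filter_upwards [ae_restrict_mem (measurableSet_orth N N)] with p hp
  rw [norm_mul, Complex.norm_real, Real.norm_eq_abs, ← mul_assoc]
  exact mul_le_mul (hC p hp) (hA p hp) (abs_nonneg _) ((norm_nonneg _).trans (hC p hp))


/-! ### Logarithmic derivatives and boundary behaviour of the weight -/

/-- Logarithmic differentiation of a product. The derivatives are given in the form `g * l`, so
that factors vanishing at `t` are allowed. -/
lemma hasDerivAt_prod_log {ι : Type*} (s : Finset ι) {g : ι → ℝ → ℝ} {l : ι → ℝ} {t : ℝ}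
    (hg : ∀ i ∈ s, HasDerivAt (g i) (g i t * l i) t) :
    HasDerivAt (fun u => ∏ i ∈ s, g i u) ((∏ i ∈ s, g i t) * ∑ i ∈ s, l i) t := by
  classical
  induction s using Finset.induction_on with
  | empty => simpa using hasDerivAt_const t (1:ℝ)
  | insert a s ha ih =>
    simp only [Finset.prod_insert ha, Finset.sum_insert ha]
    refine ((hg a (by simp)).mul (ih fun i hi => hg i (by simp [hi]))).congr_deriv ?_
    ring

/-- The derivative of `log wt` along `x i`. Where `x b = x a` the quotient has the junk value `0`,
which is harmless since `wt` has a double zero there. -/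
noncomputable def logD {N : ℕ} (κ : ℝ) (V' : ℝ → ℝ) (i : Fin N)
    (p : (Fin N → ℝ) × (Fin N → ℝ)) : ℝ :=
  (∑ a, ∑ b ∈ Finset.Ioi a, 2 * ((Pi.single i 1 : Fin N → ℝ) b - (Pi.single i 1 : Fin N → ℝ) a) /
      (p.1 b - p.1 a))
    - κ * (∑ k, V' (p.1 k) * (Pi.single i 1 : Fin N → ℝ) k)
    - ∑ k, ∑ j, (Pi.single i 1 : Fin N → ℝ) k / (p.1 k + p.2 j)

lemma hasDerivAt_wt {N : ℕ} (κ : ℝ) {V₁ V₂ V' : ℝ → ℝ} (hV : ∀ x, 0 < x → HasDerivAt V₁ (V' x) x)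
    (i : Fin N) {p : (Fin N → ℝ) × (Fin N → ℝ)} (hp : p ∈ orth N N) :
    HasDerivAt (fun t => wt κ V₁ V₂ (Function.update p.1 i t, p.2))
      (wt κ V₁ V₂ p * logD κ V' i p) (p.1 i) := by
  obtain ⟨hx, hy⟩ := hp
  have hu : ∀ k, HasDerivAt (fun t => Function.update p.1 i t k)
      ((Pi.single i 1 : Fin N → ℝ) k) (p.1 i) := fun k =>
    hasDerivAt_pi.1 (hasDerivAt_update p.1 i (p.1 i)) k
  have hself : ∀ k, Function.update p.1 i (p.1 i) k = p.1 k := fun k => by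
    rw [Function.update_eq_self]
  set δ : Fin N → ℝ := Pi.single i 1 with hδ
  have h1 : HasDerivAt (fun t => vand (Function.update p.1 i t) ^ 2)
      (vand p.1 ^ 2 * ∑ a, ∑ b ∈ Finset.Ioi a, 2 * (δ b - δ a) / (p.1 b - p.1 a)) (p.1 i) := by
    have h : ∀ a b, HasDerivAt (fun t => (Function.update p.1 i t b - Function.update p.1 i t a) ^ 2)
        ((p.1 b - p.1 a) ^ 2 * (2 * (δ b - δ a) / (p.1 b - p.1 a))) (p.1 i) := fun a b => by
      refine (((hu b).sub (hu a)).pow 2).congr_deriv ?_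
      simp only [Pi.sub_apply, hself]
      by_cases h : p.1 b - p.1 a = 0
      · simp [h]
      · field_simp
        simp
        ring
    have := hasDerivAt_prod_log (t := p.1 i) Finset.univ
      (g := fun a t => ∏ b ∈ Finset.Ioi a,
        (Function.update p.1 i t b - Function.update p.1 i t a) ^ 2) fun a _ =>
      (hasDerivAt_prod_log (t := p.1 i) (Finset.Ioi a) (g := fun b t =>
        (Function.update p.1 i t b - Function.update p.1 i t a) ^ 2) fun b _ => by
          simpa only [hself] using h a b)
    simpa only [vand, ← Finset.prod_pow, hself] using this
  have h2 : HasDerivAt (fun t => ∏ k, Real.exp (-κ * V₁ (Function.update p.1 i t k)))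
      ((∏ k, Real.exp (-κ * V₁ (p.1 k))) * ∑ k, -κ * (V' (p.1 k) * δ k)) (p.1 i) := by
    have := hasDerivAt_prod_log (t := p.1 i) Finset.univ
      (g := fun k t => Real.exp (-κ * V₁ (Function.update p.1 i t k)))
      (l := fun k => -κ * (V' (p.1 k) * δ k)) fun k _ => by
        have hk : HasDerivAt V₁ (V' (p.1 k)) (Function.update p.1 i (p.1 i) k) := by
          rw [hself]; exact hV _ (hx k)
        exact ((hk.comp (p.1 i) (hu k)).const_mul (-κ)).exp
    simpa only [hself] using this
  have h3 : HasDerivAt (fun t => ∏ k, ∏ j, (Function.update p.1 i t k + p.2 j)⁻¹)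
      ((∏ k, ∏ j, (p.1 k + p.2 j)⁻¹) * ∑ k, ∑ j, -(δ k / (p.1 k + p.2 j))) (p.1 i) := by
    have h : ∀ k j, HasDerivAt (fun t => (Function.update p.1 i t k + p.2 j)⁻¹)
        ((p.1 k + p.2 j)⁻¹ * (-(δ k / (p.1 k + p.2 j)))) (p.1 i) := fun k j => by
      have hne : p.1 k + p.2 j ≠ 0 := (add_pos (hx k) (hy j)).ne'
      refine (((hu k).add_const (p.2 j)).fun_inv (by rwa [hself])).congr_deriv ?_
      rw [hself]
      field_simp
    have := hasDerivAt_prod_log (t := p.1 i) Finset.univ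
      (g := fun k t => ∏ j, (Function.update p.1 i t k + p.2 j)⁻¹) fun k _ =>
      (hasDerivAt_prod_log (t := p.1 i) Finset.univ (g := fun j t =>
        (Function.update p.1 i t k + p.2 j)⁻¹) fun j _ => by
          simpa only [hself] using h k j)
    simpa only [hself] using this
  have := (((h1.mul_const (vand p.2 ^ 2)).mul h2).mul_const
    (∏ j, Real.exp (-κ * V₂ (p.2 j)))).mul h3
  refine this.congr_deriv ?_
  simp only [Function.update_eq_self, wt, logD, ← hδ, ← Finset.mul_sum, Finset.sum_neg_distrib,
    Pi.mul_apply]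
  ring

lemma hasDerivAt_pot (a : ℝ) (d : ℕ) (t : ℕ → ℝ) {x : ℝ} (hx : 0 < x) :
    HasDerivAt (pot a d t) (dpot a d t x) x := by
  have h1 := (Real.hasDerivAt_log hx.ne').const_mul (-a)
  have h2 : HasDerivAt (fun x => ∑ k ∈ Finset.Icc 1 d, t k * x ^ k)
      (∑ k ∈ Finset.Icc 1 d, t k * (k * x ^ (k - 1))) x :=
    HasDerivAt.fun_sum fun k _ => (hasDerivAt_pow k x).const_mul (t k)
  refine (h1.add h2).congr_deriv ?_
  rw [dpot, div_eq_mul_inv]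
  congr 1
  exact Finset.sum_congr rfl fun k _ => by ring

/-- The weight has a limit at the wall `x i = 0`. -/
lemma exists_tendsto_wt {N : ℕ} {κ a : ℝ} (hκ : 0 < κ) (ha : 0 < a) (d : ℕ) (t : ℕ → ℝ)
    (V₂ : ℝ → ℝ) (i : Fin N) {p : (Fin N → ℝ) × (Fin N → ℝ)} (hp : p ∈ orth N N) :
    ∃ L, Tendsto (fun s => wt κ (pot a d t) V₂ (Function.update p.1 i s, p.2)) (𝓝[>] 0) (𝓝 L) := by
  obtain ⟨hx, hy⟩ := hp
  have hu : ∀ k, Tendsto (fun s => Function.update p.1 i s k) (𝓝[>] 0)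
      (𝓝 (Function.update p.1 i 0 k)) := fun k => by
    refine Tendsto.mono_left (Continuous.tendsto ?_ 0) nhdsWithin_le_nhds
    have h : Continuous fun s : ℝ => Function.update p.1 i s :=
      continuous_const.update i continuous_id
    exact (continuous_apply k).comp h
  have hpot : Tendsto (pot a d t) (𝓝[>] 0) atTop := by
    have h1 : Tendsto (fun x => -a * Real.log x) (𝓝[>] 0) atTop :=
      Real.tendsto_log_nhdsGT_zero.const_mul_atBot_of_neg (by linarith)
    have h2 : Tendsto (fun x => ∑ k ∈ Finset.Icc 1 d, t k * x ^ k) (𝓝[>] 0)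
        (𝓝 (∑ k ∈ Finset.Icc 1 d, t k * 0 ^ k)) :=
      (Continuous.tendsto (by fun_prop) 0).mono_left nhdsWithin_le_nhds
    exact h1.atTop_add h2
  have hexp : Tendsto (fun x => Real.exp (-κ * pot a d t x)) (𝓝[>] 0) (𝓝 0) :=
    Real.tendsto_exp_atBot.comp (hpot.const_mul_atTop_of_neg (by linarith))
  simp only [wt]
  refine ⟨_, Tendsto.mul (Tendsto.mul (Tendsto.mul (Tendsto.mul (Tendsto.pow
    (tendsto_finsetProd _ fun a _ => tendsto_finsetProd _ fun b _ => (hu b).sub (hu a)) 2)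
    tendsto_const_nhds) (tendsto_finsetProd (a := fun k => if k = i then 0 else
      Real.exp (-κ * pot a d t (p.1 k))) _ fun k _ => ?_)) tendsto_const_nhds)
    (tendsto_finsetProd _ fun k _ => tendsto_finsetProd _ fun j _ =>
      ((hu k).add_const (p.2 j)).inv₀ ?_)⟩
  · split_ifs with h
    · subst h; simp only [Function.update_self]; exact hexp
    · simp [Function.update_of_ne h]
  · have := hy j
    by_cases h : k = i
    · subst h; simp; exact this.ne'
    · simp only [Function.update_of_ne h]; have := hx k; positivity

/-! ### The divergence identity -/

lemma sum_mul_single {N : ℕ} (f : Fin N → ℂ) (k : Fin N) :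
    ∑ i, f i * (((Pi.single i 1 : Fin N → ℝ) k : ℝ) : ℂ) = f k := by
  rw [Finset.sum_eq_single k]
  · simp
  · intro i _ hi
    simp [hi.symm]
  · simp

lemma sum_mul_logD {N : ℕ} (κ : ℝ) (V' : ℝ → ℝ) (p : (Fin N → ℝ) × (Fin N → ℝ)) (f : Fin N → ℂ) :
    ∑ i, f i * (logD κ V' i p : ℂ) =
      (∑ a, ∑ b ∈ Finset.Ioi a, 2 * (f b - f a) / ((p.1 b : ℂ) - p.1 a))
      - κ * (∑ k, (V' (p.1 k) : ℂ) * f k) - ∑ k, ∑ j, f k / ((p.1 k : ℂ) + p.2 j) := by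
  simp only [logD, Complex.ofReal_sub, Complex.ofReal_sum, Complex.ofReal_mul, Complex.ofReal_div,
    Complex.ofReal_add, mul_sub, Finset.sum_sub_distrib, Complex.ofReal_ofNat]
  congr 1
  · congr 1
    · simp only [Finset.mul_sum]
      rw [Finset.sum_comm]
      refine Finset.sum_congr rfl fun a _ => ?_
      rw [Finset.sum_comm]
      refine Finset.sum_congr rfl fun b _ => ?_
      simp_rw [← mul_sub, mul_div_assoc, mul_left_comm _ (2:ℂ), ← Finset.mul_sum, ← mul_div_assoc,
        ← Finset.sum_div, mul_sub, Finset.sum_sub_distrib, sum_mul_single]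
      ring
    · simp only [Finset.mul_sum]
      rw [Finset.sum_comm]
      refine Finset.sum_congr rfl fun k _ => ?_
      rw [← sum_mul_single f k, Finset.mul_sum, Finset.mul_sum]
      exact Finset.sum_congr rfl fun i _ => by ring
  · simp only [Finset.mul_sum]
    rw [Finset.sum_comm]
    refine Finset.sum_congr rfl fun k _ => ?_
    rw [Finset.sum_comm]
    refine Finset.sum_congr rfl fun j _ => ?_
    simp_rw [← mul_div_assoc, ← Finset.sum_div, sum_mul_single]

lemma wt_eq_zero {N : ℕ} (κ : ℝ) (V₁ V₂ : ℝ → ℝ) {p : (Fin N → ℝ) × (Fin N → ℝ)} {a b : Fin N}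
    (hab : a < b) (h : p.1 a = p.1 b) : wt κ V₁ V₂ p = 0 := by
  have : vand p.1 = 0 :=
    Finset.prod_eq_zero (Finset.mem_univ a) (Finset.prod_eq_zero (Finset.mem_Ioi.2 hab)
      (by rw [h, sub_self]))
  simp [wt, this]

lemma sq_sum_eq {N : ℕ} (g : Fin N → ℂ) :
    (∑ i, g i) ^ 2 = ∑ i, g i ^ 2 + ∑ a, ∑ b ∈ Finset.Ioi a, 2 * (g a * g b) := by
  have h : ∑ a, ∑ b ∈ Finset.Ioi a, 2 * (g a * g b) = ∑ i, ∑ j ∈ {i}ᶜ, g j * g i := by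
    rw [← Finset.sum_sum_Ioi_add_eq_sum_sum_off_diag fun a b => g a * g b]
    exact Finset.sum_congr rfl fun a _ => Finset.sum_congr rfl fun b _ => by ring
  rw [h, ← Finset.sum_add_distrib, sq, Finset.sum_mul_sum]
  refine Finset.sum_congr rfl fun i _ => ?_
  rw [Fintype.sum_eq_add_sum_compl i, sq]
  exact congrArg _ (Finset.sum_congr rfl fun j _ => mul_comm _ _)

/-- The partial derivative along `x i` of `((ξ - x i)⁻¹ - ξ⁻¹) wt`. -/
noncomputable def divTerm {N : ℕ} (κ : ℝ) (V₁ V₂ V' : ℝ → ℝ) (ξ : ℂ) (i : Fin N)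
    (p : (Fin N → ℝ) × (Fin N → ℝ)) : ℂ :=
  ((ξ - (p.1 i : ℂ))⁻¹ ^ 2 + ((ξ - (p.1 i : ℂ))⁻¹ - ξ⁻¹) * (logD κ V' i p : ℂ)) *
    (wt κ V₁ V₂ p : ℂ)

/-- Pointwise, the divergence of the vector field is the loop-equation integrand. For distinct
eigenvalues `((ξ - x b)⁻¹ - (ξ - x a)⁻¹) / (x b - x a) = (ξ - x a)⁻¹ (ξ - x b)⁻¹` turns the Coulomb
interaction into the off-diagonal part of `(∑ (ξ - x i)⁻¹)²`. -/
lemma sum_divTerm {N : ℕ} (κ : ℝ) (V₁ V₂ V' : ℝ → ℝ) {ξ : ℂ}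
    (hξ : ∀ r : ℝ, 0 ≤ r → ξ ≠ (r : ℂ)) {p : (Fin N → ℝ) × (Fin N → ℝ)} (hp : p ∈ orth N N) :
    ∑ i, divTerm κ V₁ V₂ V' ξ i p = ((∑ i, (ξ - (p.1 i : ℂ))⁻¹) ^ 2
      - κ * (∑ k, (V' (p.1 k) : ℂ) * ((ξ - (p.1 k : ℂ))⁻¹ - ξ⁻¹))
      - ∑ k, ∑ j, ((ξ - (p.1 k : ℂ))⁻¹ - ξ⁻¹) / ((p.1 k : ℂ) + p.2 j)) * (wt κ V₁ V₂ p : ℂ) := by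
  simp only [divTerm, ← Finset.sum_mul]
  by_cases hw : wt κ V₁ V₂ p = 0
  · simp [hw]
  congr 1
  have h : ∑ a, ∑ b ∈ Finset.Ioi a, 2 * (((ξ - (p.1 b : ℂ))⁻¹ - ξ⁻¹) - ((ξ - (p.1 a : ℂ))⁻¹ - ξ⁻¹)) /
      ((p.1 b : ℂ) - p.1 a) = ∑ a, ∑ b ∈ Finset.Ioi a,
        2 * ((ξ - (p.1 a : ℂ))⁻¹ * (ξ - (p.1 b : ℂ))⁻¹) := by
    refine Finset.sum_congr rfl fun a _ => Finset.sum_congr rfl fun b hb => ?_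
    have hne : (p.1 b : ℂ) - p.1 a ≠ 0 := by
      intro h
      refine hw (wt_eq_zero κ V₁ V₂ (Finset.mem_Ioi.1 hb) ?_)
      exact_mod_cast (sub_eq_zero.1 h).symm
    have ha := sub_ne_zero.2 (hξ _ (hp.1 a).le)
    have hb' := sub_ne_zero.2 (hξ _ (hp.1 b).le)
    rw [sub_sub_sub_cancel_right]
    field_simp
    ring
  rw [Finset.sum_add_distrib, sum_mul_logD, sq_sum_eq, h]
  ring


/-! ### Integrability and vanishing integral of the divergence -/

lemma integrableOn_divTerm {N d : ℕ} (hd : 1 ≤ d) {κ a : ℝ} {t : ℕ → ℝ} {V₂ : ℝ → ℝ}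
    (hV₂ : Measurable V₂) {ξ : ℂ} (hξ : ∀ r : ℝ, 0 ≤ r → ξ ≠ (r : ℂ)) {θ : ℝ} (h0 : 0 ≤ θ)
    (h1 : θ ≤ 1) (hi : IntegrableOn (fun p : (Fin N → ℝ) × (Fin N → ℝ) =>
      growth d p * maj κ θ (pot a d t) V₂ p) (orth N N)) (i : Fin N) :
    IntegrableOn (divTerm κ (pot a d t) V₂ (dpot a d t) ξ i) (orth N N) := by
  have hwm := measurable_wt (N := N) κ (measurable_pot a d t) hV₂
  have hg := bdd_inv_sub (N := N) (M := N) hξ i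
  have hf : Bdd (fun p : (Fin N → ℝ) × (Fin N → ℝ) => (ξ - (p.1 i : ℂ))⁻¹ - ξ⁻¹) := by
    obtain ⟨hm, C, hC⟩ := hg
    exact ⟨hm.sub_const _, C + ‖ξ⁻¹‖, fun p hp =>
      (norm_sub_le _ _).trans (add_le_add_left (hC p hp) _)⟩
  set δ : Fin N → ℝ := Pi.single i 1 with hδ
  -- the regular part of the logarithmic derivative
  have hreg := ((hg.mul hg).dom hd).add (hf.mul_dom
    (((((bdd_const (κ : ℂ)).mul_dom (Dom.sum Finset.univ fun k _ =>
      (bdd_const (δ k : ℂ)).mul_dom (dom_dpot hd a t k))).neg).sub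
    (Dom.sum Finset.univ fun k _ => Dom.sum Finset.univ fun j _ =>
      (bdd_const (δ k : ℂ)).mul_dom (dom_inv_add (M := N) hd k j)))))
  have hreg := hreg.integrableOn hwm (fun p hp => by
    simpa using abs_wt_mul_le (κ := κ) (V₁ := pot a d t) (V₂ := V₂) h0 h1 hp (r := 1)
      (by simpa using abs_vand_le hp.1)) hi
  -- the Coulomb interaction
  have hsing : IntegrableOn (fun p : (Fin N → ℝ) × (Fin N → ℝ) =>
      ∑ a', ∑ b ∈ Finset.Ioi a', (((ξ - (p.1 i : ℂ))⁻¹ - ξ⁻¹) * (2 * ((δ b : ℂ) - δ a'))) *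
        ((wt κ (pot a d t) V₂ p * (p.1 b - p.1 a')⁻¹ : ℝ) : ℂ)) (orth N N) := by
    refine integrable_finsetSum _ fun a' _ => integrable_finsetSum _ fun b hb => ?_
    refine ((hf.mul (bdd_const (2 * ((δ b : ℂ) - δ a')))).dom hd).integrableOn
      (hwm.mul (by fun_prop)) (fun p hp => abs_wt_mul_le h0 h1 hp ?_) hi
    simpa only [div_eq_mul_inv] using abs_vand_div_le hp.1 (Finset.mem_Ioi.1 hb)
  refine (hreg.add hsing).congr (Eventually.of_forall fun p => ?_)
  simp only [divTerm, logD, ← hδ, Pi.add_apply, Complex.ofReal_sub, Complex.ofReal_sum,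
    Complex.ofReal_mul, Complex.ofReal_div, Complex.ofReal_add, Complex.ofReal_inv,
    Complex.ofReal_ofNat]
  have e1 : ∑ a', ∑ b ∈ Finset.Ioi a', (((ξ - (p.1 i : ℂ))⁻¹ - ξ⁻¹) * (2 * ((δ b : ℂ) - δ a'))) *
        ((wt κ (pot a d t) V₂ p : ℂ) * ((p.1 b : ℂ) - p.1 a')⁻¹) =
      ((ξ - (p.1 i : ℂ))⁻¹ - ξ⁻¹) * (∑ a', ∑ b ∈ Finset.Ioi a',
        2 * ((δ b : ℂ) - δ a') / ((p.1 b : ℂ) - p.1 a')) * (wt κ (pot a d t) V₂ p : ℂ) := by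
    simp only [Finset.mul_sum, Finset.sum_mul]
    exact Finset.sum_congr rfl fun _ _ => Finset.sum_congr rfl fun _ _ => by ring
  have e2 : ∑ k, (δ k : ℂ) * (dpot a d t (p.1 k) : ℂ) = ∑ k, (dpot a d t (p.1 k) : ℂ) * δ k :=
    Finset.sum_congr rfl fun _ _ => mul_comm _ _
  rw [e1, e2]
  simp only [div_eq_mul_inv]
  ring

lemma integral_divTerm {N d : ℕ} (hd : 1 ≤ d) {κ a : ℝ} (hκ : 0 < κ) (ha : 0 < a) {t : ℕ → ℝ}
    {V₂ : ℝ → ℝ} (hV₂ : Measurable V₂) {ξ : ℂ} (hξ : ∀ r : ℝ, 0 ≤ r → ξ ≠ (r : ℂ)) {θ : ℝ}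
    (h0 : 0 ≤ θ) (h1 : θ ≤ 1) (hi : IntegrableOn (fun p : (Fin N → ℝ) × (Fin N → ℝ) =>
      growth d p * maj κ θ (pot a d t) V₂ p) (orth N N)) (i : Fin N) :
    ∫ p in orth N N, divTerm κ (pot a d t) V₂ (dpot a d t) ξ i p = 0 := by
  have hwm := measurable_wt (N := N) κ (measurable_pot a d t) hV₂
  have hf : Bdd (fun p : (Fin N → ℝ) × (Fin N → ℝ) => (ξ - (p.1 i : ℂ))⁻¹ - ξ⁻¹) := by
    obtain ⟨hm, C, hC⟩ := bdd_inv_sub (N := N) (M := N) hξ i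
    exact ⟨hm.sub_const _, C + ‖ξ⁻¹‖, fun p hp =>
      (norm_sub_le _ _).trans (add_le_add_left (hC p hp) _)⟩
  refine integral_orth_deriv_eq_zero i
    (F := fun p => ((ξ - (p.1 i : ℂ))⁻¹ - ξ⁻¹) * (wt κ (pot a d t) V₂ p : ℂ))
    ((hf.dom hd).integrableOn hwm (fun p hp => by
      simpa using abs_wt_mul_le (κ := κ) (V₁ := pot a d t) (V₂ := V₂) h0 h1 hp (r := 1)
        (by simpa using abs_vand_le hp.1)) hi)
    (integrableOn_divTerm hd hV₂ hξ h0 h1 hi i) (fun p hp => ?_) (fun p hp => ?_)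
  · have hw := (hasDerivAt_wt κ (V₂ := V₂) (fun x hx => hasDerivAt_pot a d t hx) i hp).ofReal_comp
    have hne : ξ - (p.1 i : ℂ) ≠ 0 := sub_ne_zero.2 (hξ _ (hp.1 i).le)
    have hg : HasDerivAt (fun s : ℝ => (ξ - (s : ℂ))⁻¹ - ξ⁻¹) ((ξ - (p.1 i : ℂ))⁻¹ ^ 2) (p.1 i) := by
      refine ((((hasDerivAt_id (p.1 i)).ofReal_comp.const_sub ξ).fun_inv hne).sub_const _).congr_deriv
        ?_
      simp
    simp only [Function.update_self]
    refine (hg.mul hw).congr_deriv ?_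
    simp only [Function.update_eq_self, divTerm, Complex.ofReal_mul]
    ring
  · obtain ⟨L, hL⟩ := exists_tendsto_wt hκ ha d t V₂ i hp
    have hξ0 : ξ ≠ 0 := by simpa using hξ 0 le_rfl
    have hg : Tendsto (fun s : ℝ => (ξ - (s : ℂ))⁻¹ - ξ⁻¹) (𝓝[>] 0) (𝓝 0) := by
      have : ContinuousAt (fun s : ℝ => (ξ - (s : ℂ))⁻¹ - ξ⁻¹) 0 := by
        refine ContinuousAt.sub (ContinuousAt.inv₀ (by fun_prop) (by simpa using hξ0))
          continuousAt_const
      have h := this.tendsto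
      simp only [Complex.ofReal_zero, sub_zero, sub_self] at h
      exact h.mono_left nhdsWithin_le_nhds
    simp only [Function.update_self]
    have := hg.mul ((Complex.continuous_ofReal.tendsto L).comp hL)
    simpa using this

lemma integral_combination {α : Type*} [MeasurableSpace α] {μ : Measure α} {f₁ f₂ f₃ f₄ f₅ : α → ℂ}
    (h₁ : Integrable f₁ μ) (h₂ : Integrable f₂ μ) (h₃ : Integrable f₃ μ) (h₄ : Integrable f₄ μ)
    (h₅ : Integrable f₅ μ) (c e : ℂ) :
    ∫ x, f₁ x - c * f₂ x + f₃ x + f₄ x + e * f₅ x ∂μ =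
      ∫ x, f₁ x ∂μ - c * ∫ x, f₂ x ∂μ + ∫ x, f₃ x ∂μ + ∫ x, f₄ x ∂μ + e * ∫ x, f₅ x ∂μ := by
  have h12 : Integrable (fun x => f₁ x - c * f₂ x) μ := h₁.sub (h₂.const_mul c)
  have h123 : Integrable (fun x => f₁ x - c * f₂ x + f₃ x) μ := h12.add h₃
  have h1234 : Integrable (fun x => f₁ x - c * f₂ x + f₃ x + f₄ x) μ := h123.add h₄
  rw [integral_add h1234 (h₅.const_mul e), integral_add h123 h₄, integral_add h12 h₃,
    integral_sub h₁ (h₂.const_mul c), integral_const_mul, integral_const_mul]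

end CauchyLoop

/-! ### The loop equation -/

/-- Quadratic loop equation for the first matrix (eq. MLE.3) for the Cauchy two-matrix model:
for every spectral parameter `ξ ∈ ℂ ∖ [0,∞)`, all the expectations below are finite and
`E[W₁(ξ)²] − V₁′(ξ)·E[W₁(ξ)] + E[P₁(ξ)] + E[Ξ₁(ξ)] + ξ⁻¹·E[I₁] = 0`,
where `E[g] = (∫_S g·w)/Z` is the expectation with respect to the Cauchy eigenvalue weight
`w` on `S = (0,∞)^N × (0,∞)^N` with total mass `Z > 0`. -/
theorem cauchy_model_quadratic_loop_equation_first_matrix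
    (N : ℕ) (hN : 1 ≤ N) (T : ℝ) (hT : 0 < T)
    (a₁ a₂ : ℝ) (ha₁ : 0 < a₁) (ha₂ : 0 < a₂)
    (d₁ d₂ : ℕ) (hd₁ : 1 ≤ d₁) (hd₂ : 1 ≤ d₂)
    (t₁ t₂ : ℕ → ℝ) (ht₁ : 0 < t₁ d₁) (ht₂ : 0 < t₂ d₂)
    -- the potentials V_i(x) = −t₋₁^{(i)} ln x + ∑_{k=1}^{d_i} t_k^{(i)} x^k
    (V₁ V₂ : ℝ → ℝ)
    (hV₁ : ∀ x : ℝ, V₁ x = -a₁ * Real.log x + ∑ k ∈ Finset.Icc 1 d₁, t₁ k * x ^ k)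
    (hV₂ : ∀ x : ℝ, V₂ x = -a₂ * Real.log x + ∑ k ∈ Finset.Icc 1 d₂, t₂ k * x ^ k)
    -- the derivative V₁′ as a function of a complex variable
    (V₁' : ℂ → ℂ)
    (hV₁' : ∀ z : ℂ, V₁' z =
      -(a₁ : ℂ) / z + ∑ k ∈ Finset.Icc 1 d₁, (k : ℂ) * (t₁ k : ℂ) * z ^ (k - 1))
    -- the domain (0,∞)^N × (0,∞)^N
    (S : Set ((Fin N → ℝ) × (Fin N → ℝ)))
    (hS : S = {p | (∀ i, 0 < p.1 i) ∧ (∀ j, 0 < p.2 j)})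
    -- the Vandermonde product
    (Δ : (Fin N → ℝ) → ℝ)
    (hΔ : ∀ x : Fin N → ℝ, Δ x = ∏ i : Fin N, ∏ j ∈ Finset.Ioi i, (x j - x i))
    -- the Cauchy eigenvalue weight, assumed integrable with total mass Z > 0
    (w : ((Fin N → ℝ) × (Fin N → ℝ)) → ℝ)
    (hw : ∀ p, w p = (Δ p.1) ^ 2 * (Δ p.2) ^ 2 *
        Real.exp (-((N : ℝ) / T) * ∑ i : Fin N, (V₁ (p.1 i) + V₂ (p.2 i))) *
        ∏ i : Fin N, ∏ j : Fin N, (p.1 i + p.2 j)⁻¹)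
    (hwInt : IntegrableOn w S volume)
    (Z : ℝ) (hZ : Z = ∫ p in S, w p) (hZpos : 0 < Z)
    -- the spectral parameter ξ ∈ ℂ ∖ [0,∞)
    (ξ : ℂ) (hξ : ∀ r : ℝ, 0 ≤ r → ξ ≠ (r : ℂ))
    -- the random variables W₁(ξ), P₁(ξ), Ξ₁(ξ), I₁
    (W₁ P₁ Ξ₁ I₁ : ((Fin N → ℝ) × (Fin N → ℝ)) → ℂ)
    (hW₁ : ∀ p, W₁ p = ((T : ℂ) / (N : ℂ)) * ∑ i : Fin N, (ξ - (p.1 i : ℂ))⁻¹)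
    (hP₁ : ∀ p, P₁ p = ((T : ℂ) / (N : ℂ)) *
        ∑ i : Fin N, (V₁' ξ - V₁' ((p.1 i : ℝ) : ℂ)) / (ξ - (p.1 i : ℂ)))
    (hΞ₁ : ∀ p, Ξ₁ p = -((T : ℂ) ^ 2 / (N : ℂ) ^ 2) *
        ∑ i : Fin N, ∑ j : Fin N, ((ξ - (p.1 i : ℂ)) * ((p.1 i : ℂ) + (p.2 j : ℂ)))⁻¹)
    (hI₁ : ∀ p, I₁ p = ((T : ℂ) / (N : ℂ)) * ∑ i : Fin N, V₁' ((p.1 i : ℝ) : ℂ)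
        + ((T : ℂ) ^ 2 / (N : ℂ) ^ 2) *
            ∑ i : Fin N, ∑ j : Fin N, ((p.1 i : ℂ) + (p.2 j : ℂ))⁻¹) :
    IntegrableOn (fun p => (W₁ p) ^ 2 * (w p : ℂ)) S volume ∧
    IntegrableOn (fun p => W₁ p * (w p : ℂ)) S volume ∧
    IntegrableOn (fun p => P₁ p * (w p : ℂ)) S volume ∧
    IntegrableOn (fun p => Ξ₁ p * (w p : ℂ)) S volume ∧
    IntegrableOn (fun p => I₁ p * (w p : ℂ)) S volume ∧
    (∫ p in S, (W₁ p) ^ 2 * (w p : ℂ)) / (Z : ℂ)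
      - V₁' ξ * ((∫ p in S, W₁ p * (w p : ℂ)) / (Z : ℂ))
      + (∫ p in S, P₁ p * (w p : ℂ)) / (Z : ℂ)
      + (∫ p in S, Ξ₁ p * (w p : ℂ)) / (Z : ℂ)
      + ξ⁻¹ * ((∫ p in S, I₁ p * (w p : ℂ)) / (Z : ℂ)) = 0 := by
  have hκ : 0 < (N : ℝ) / T := div_pos (by exact_mod_cast hN) hT
  set κ : ℝ := (N : ℝ) / T with hκd
  obtain rfl : V₁ = CauchyLoop.pot a₁ d₁ t₁ := funext hV₁
  obtain rfl : V₂ = CauchyLoop.pot a₂ d₂ t₂ := funext hV₂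
  obtain rfl : S = CauchyLoop.orth N N := hS
  obtain rfl : Δ = CauchyLoop.vand := funext hΔ
  obtain rfl : w = CauchyLoop.wt κ (CauchyLoop.pot a₁ d₁ t₁) (CauchyLoop.pot a₂ d₂ t₂) := by
    funext p
    rw [hw, CauchyLoop.wt, Finset.sum_add_distrib, mul_add, Real.exp_add, Finset.mul_sum,
      Finset.mul_sum, Real.exp_sum, Real.exp_sum]
    ring
  obtain rfl : W₁ = _ := funext hW₁
  obtain rfl : P₁ = _ := funext hP₁
  obtain rfl : Ξ₁ = _ := funext hΞ₁
  obtain rfl : I₁ = _ := funext hI₁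
  -- any `θ ∈ (0, 1]` below `κ a₁` would do
  set θ : ℝ := min (κ * a₁ / 2) 1 with hθ
  have hκa₁ : 0 < κ * a₁ := by positivity
  have hκa₂ : 0 < κ * a₂ := by positivity
  have h0 : 0 < θ := lt_min (by positivity) one_pos
  have h1 : θ ≤ 1 := min_le_right _ _
  have hθ1 : θ < κ * a₁ := (min_le_left _ _).trans_lt (by linarith)
  have hi := CauchyLoop.integrableOn_growth_mul_maj (N := N) hκ hd₁ hd₂ ht₁ ht₂ d₁ hθ1
    (by linarith : 0 < θ + κ * a₂)
  have hV : ∀ x : ℝ, V₁' (x : ℂ) = (CauchyLoop.dpot a₁ d₁ t₁ x : ℂ) := fun x => by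
    rw [hV₁', CauchyLoop.dpot]; push_cast; rfl
  simp only [hV]
  set w := CauchyLoop.wt (N := N) κ (CauchyLoop.pot a₁ d₁ t₁) (CauchyLoop.pot a₂ d₂ t₂) with hwd
  have hV₂m := CauchyLoop.measurable_pot a₂ d₂ t₂
  have hwm : Measurable w :=
    CauchyLoop.measurable_wt (N := N) κ (CauchyLoop.measurable_pot a₁ d₁ t₁) hV₂m
  have hint : ∀ {h : (Fin N → ℝ) × (Fin N → ℝ) → ℂ}, CauchyLoop.Dom d₁ h →
      IntegrableOn (fun p => h p * (w p : ℂ)) (CauchyLoop.orth N N) := fun hh =>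
    hh.integrableOn hwm (fun p hp => by
      simpa using CauchyLoop.abs_wt_mul_le (κ := κ) (V₁ := CauchyLoop.pot a₁ d₁ t₁)
        (V₂ := CauchyLoop.pot a₂ d₂ t₂) h0.le h1 hp (r := 1)
        (by simpa using CauchyLoop.abs_vand_le hp.1)) hi
  have hg := fun i => CauchyLoop.bdd_inv_sub (N := N) (M := N) hξ i
  have hVd := fun i => CauchyLoop.dom_dpot (N := N) (M := N) hd₁ a₁ t₁ i
  have hxy := fun i j => CauchyLoop.dom_inv_add (N := N) (M := N) hd₁ i j
  have dW := (CauchyLoop.bdd_const (N := N) (M := N) ((T : ℂ) / N)).mul_dom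
    (CauchyLoop.Dom.sum Finset.univ fun i _ => (hg i).dom hd₁)
  have dW2 := (CauchyLoop.bdd_const (N := N) (M := N) (((T : ℂ) / N) ^ 2)).mul_dom
    (CauchyLoop.Dom.sum Finset.univ fun i _ => CauchyLoop.Dom.sum Finset.univ fun j _ =>
      ((hg i).mul (hg j)).dom hd₁)
  have dP := (CauchyLoop.bdd_const (N := N) (M := N) ((T : ℂ) / N)).mul_dom
    (CauchyLoop.Dom.sum Finset.univ fun i _ =>
      (hg i).mul_dom (((CauchyLoop.bdd_const (V₁' ξ)).dom hd₁).sub (hVd i)))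
  have dX := (CauchyLoop.bdd_const (N := N) (M := N) (-((T : ℂ) ^ 2 / N ^ 2))).mul_dom
    (CauchyLoop.Dom.sum Finset.univ fun i _ => CauchyLoop.Dom.sum Finset.univ fun j _ =>
      (hg i).mul_dom (hxy i j))
  have dI := ((CauchyLoop.bdd_const (N := N) (M := N) ((T : ℂ) / N)).mul_dom
    (CauchyLoop.Dom.sum Finset.univ fun i _ => hVd i)).add
    ((CauchyLoop.bdd_const (N := N) (M := N) ((T : ℂ) ^ 2 / N ^ 2)).mul_dom
    (CauchyLoop.Dom.sum Finset.univ fun i _ => CauchyLoop.Dom.sum Finset.univ fun j _ => hxy i j))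
  have iW := hint dW
  have iW2 : IntegrableOn (fun p : (Fin N → ℝ) × (Fin N → ℝ) =>
      ((T : ℂ) / N * ∑ i, (ξ - (p.1 i : ℂ))⁻¹) ^ 2 * (w p : ℂ)) (CauchyLoop.orth N N) := by
    refine (hint dW2).congr (Filter.Eventually.of_forall fun p => ?_)
    simp only [← Finset.sum_mul_sum]
    ring
  have iP : IntegrableOn (fun p : (Fin N → ℝ) × (Fin N → ℝ) => ((T : ℂ) / N *
      ∑ i, (V₁' ξ - (CauchyLoop.dpot a₁ d₁ t₁ (p.1 i) : ℂ)) / (ξ - (p.1 i : ℂ))) * (w p : ℂ))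
      (CauchyLoop.orth N N) := by
    refine (hint dP).congr (Filter.Eventually.of_forall fun p => ?_)
    simp only [div_eq_mul_inv, mul_comm]
  have iX : IntegrableOn (fun p : (Fin N → ℝ) × (Fin N → ℝ) => (-((T : ℂ) ^ 2 / N ^ 2) *
      ∑ i, ∑ j, ((ξ - (p.1 i : ℂ)) * ((p.1 i : ℂ) + (p.2 j : ℂ)))⁻¹) * (w p : ℂ))
      (CauchyLoop.orth N N) := by
    refine (hint dX).congr (Filter.Eventually.of_forall fun p => ?_)
    simp only [mul_inv]
  have iI := hint dI
  refine ⟨iW2, iW, iP, iX, iI, ?_⟩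
  have hdiv : ∑ i, ∫ p in CauchyLoop.orth N N, CauchyLoop.divTerm κ (CauchyLoop.pot a₁ d₁ t₁)
      (CauchyLoop.pot a₂ d₂ t₂) (CauchyLoop.dpot a₁ d₁ t₁) ξ i p = 0 :=
    Finset.sum_eq_zero fun i _ =>
      CauchyLoop.integral_divTerm hd₁ hκ ha₁ hV₂m hξ h0.le h1 hi i
  rw [← integral_finsetSum _ fun i _ =>
    CauchyLoop.integrableOn_divTerm hd₁ hV₂m hξ h0.le h1 hi i] at hdiv
  have hT' : (T : ℂ) ≠ 0 := by exact_mod_cast hT.ne'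
  have hN' : (N : ℂ) ≠ 0 := by exact_mod_cast (by omega : N ≠ 0)
  have hκ' : (κ : ℂ) = N / T := by rw [hκd]; push_cast; rfl
  -- the integrand of the loop equation is `(T / N)²` times a divergence
  have key := setIntegral_congr_fun (μ := volume) (CauchyLoop.measurableSet_orth N N)
    (f := fun p => ((((((T : ℂ) / N * ∑ i, (ξ - (p.1 i : ℂ))⁻¹) ^ 2 * (w p : ℂ)
      - V₁' ξ * (((T : ℂ) / N * ∑ i, (ξ - (p.1 i : ℂ))⁻¹) * (w p : ℂ)))
      + ((T : ℂ) / N * ∑ i, (V₁' ξ - (CauchyLoop.dpot a₁ d₁ t₁ (p.1 i) : ℂ)) /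
          (ξ - (p.1 i : ℂ))) * (w p : ℂ))
      + (-((T : ℂ) ^ 2 / N ^ 2) *
          ∑ i, ∑ j, ((ξ - (p.1 i : ℂ)) * ((p.1 i : ℂ) + (p.2 j : ℂ)))⁻¹) * (w p : ℂ))
      + ξ⁻¹ * (((T : ℂ) / N * ∑ i, (CauchyLoop.dpot a₁ d₁ t₁ (p.1 i) : ℂ)
          + (T : ℂ) ^ 2 / N ^ 2 * ∑ i, ∑ j, ((p.1 i : ℂ) + (p.2 j : ℂ))⁻¹) * (w p : ℂ))))
    (g := fun p => ((T : ℂ) / N) ^ 2 * ∑ i, CauchyLoop.divTerm κ (CauchyLoop.pot a₁ d₁ t₁)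
      (CauchyLoop.pot a₂ d₂ t₂) (CauchyLoop.dpot a₁ d₁ t₁) ξ i p) (fun p hp => by
    simp only []
    rw [CauchyLoop.sum_divTerm _ _ _ _ hξ hp, ← hwd, hκ']
    simp only [mul_inv, div_eq_mul_inv]
    simp only [sub_mul, mul_sub, Finset.sum_sub_distrib, ← Finset.mul_sum, ← Finset.sum_mul]
    field_simp
    ring)
  rw [integral_const_mul, hdiv, mul_zero] at key
  have key' := (CauchyLoop.integral_combination iW2 iW iP iX iI (V₁' ξ) ξ⁻¹).symm.trans key
  rw [← mul_div_assoc, ← mul_div_assoc, ← sub_div, ← add_div, ← add_div, ← add_div, key', zero_div]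
end

section
/- Quadratic master loop equation (eq. YQMLE): for every x ∈ ℂ ∖ ℝ, all of the expectations below are finite and E[Y₁(x)² + Y₂(x)² + Y₁(x)·Y₂(x)] = E[R(x)] − x⁻¹·E[I₁ + I₂]. -/
/-!
The identity is a combination of Schwinger-Dyson (loop) equations, obtained by integrating total
derivatives of the weight `w` against test functions.

For `f(u) = 1 / (x - u)`, the integral of `∑ ∂_{x_i} (f(x_i) w)` vanishes. Dividing the integrand
by `w`, the Vandermonde product contributes a double sum of `(f(x_j) - f(x_i)) / (x_j - x_i)`, which
equals `f(x_i) f(x_j)` and together with `f' = f²` makes up the full square `(∑ f(x_i))²`; the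
potential contributes `-(N/T) ∑ f(x_i) V₁'(x_i)`; the Cauchy product contributes
`-∑ f(x_i) / (x_i + y_j)` (`loop_resolvent`). The variables `y_j` give the same equation with
`g(v) = 1 / (-x - v)`, by symmetry (`loop_swap`). Adding both, the partial fraction identity
`f(x_i) g(y_j) = -(f(x_i) + g(y_j)) / (x_i + y_j)` turns the two mixed sums into `W₁ W₂`
(`sum_mul_sum_resolvent`), and the shifts `U₁'`, `U₂'` are chosen so that the terms linear in `W₁`,
`W₂` are absorbed. Hence the quadratic expression and `R` have the same expectation. The test
function `1` gives in the same way that `I₁` and `I₂` both have mean zero (`loop_one`), so that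
the term with `x⁻¹` vanishes.

The analytic content is to justify integrability and the vanishing of the boundary terms
(`loop_single`). Both rest on the bound
`|Δ(x)| |Δ(y)| ∏ (x_i + y_j)⁻¹ ≤ ∏ x_i ^ (-α) y_i ^ (-(1 - α))` for `0 ≤ α ≤ 1` (`vdm_mul_le`).
All of its left-hand side is symmetric in the `x_i` and in the `y_j`, so both families may be
assumed increasing, and then the factors can be compared pair by pair. For `0 < α < a` the
remaining Vandermonde factors, being polynomial, leave enough room for one extra singularity
`1 / x_i` or `1 / (x_j - x_i)` in the integrand, and the weight still tends to zero at `x_i = 0`.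
-/

open MeasureTheory

namespace CauchyModel

open Set Filter Topology

/-! ### Confining functions on the half-line -/

/-- `q` is differentiable with derivative `q'`, the derivative grows at most polynomially on
`(0, ∞)`, and `q` dominates a linear function of positive slope there. -/
structure IsConfining (q q' : ℝ → ℝ) : Prop where
  hasDeriv : ∀ u, HasDerivAt q (q' u) u
  meas : Measurable q'
  growth : ∃ C : ℝ, 0 ≤ C ∧ ∃ m : ℕ, ∀ u, 0 < u → |q' u| ≤ C * (1 + u) ^ m
  lower : ∃ ε : ℝ, 0 < ε ∧ ∃ K : ℝ, ∀ u, 0 < u → ε * u - K ≤ q u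

lemma IsConfining.continuous {q q' : ℝ → ℝ} (h : IsConfining q q') : Continuous q :=
  continuous_iff_continuousAt.2 fun u => (h.hasDeriv u).continuousAt

lemma isConfining_poly (d : ℕ) (hd : 1 ≤ d) (t : ℕ → ℝ) (ht : 0 < t d) :
    IsConfining (fun u => ∑ k ∈ Finset.Icc 1 d, t k * u ^ k)
      (fun u => ∑ k ∈ Finset.Icc 1 d, (k : ℝ) * t k * u ^ (k - 1)) where
  hasDeriv u := by
    refine HasDerivAt.fun_sum fun k _ => ?_
    have := (hasDerivAt_pow k u).const_mul (t k)
    exact this.congr_deriv (by ring)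
  meas := by fun_prop
  growth := by
    refine ⟨∑ k ∈ Finset.Icc 1 d, |(k : ℝ) * t k|, Finset.sum_nonneg fun _ _ => abs_nonneg _,
      d, fun u hu => ?_⟩
    rw [Finset.sum_mul]
    refine (Finset.abs_sum_le_sum_abs _ _).trans (Finset.sum_le_sum fun k hk => ?_)
    rw [abs_mul]
    gcongr
    rw [abs_of_nonneg (by positivity)]
    have hk' := Finset.mem_Icc.1 hk
    calc u ^ (k - 1) ≤ (1 + u) ^ (k - 1) := by gcongr; linarith
      _ ≤ (1 + u) ^ d := pow_le_pow_right₀ (by linarith) (by omega)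
  lower := by
    -- At infinity `u ^ d` with `d ≥ 1` beats both the lower powers and `u`;
    -- on a compact interval continuity gives a bound.
    set ε := t d / 2 with hε
    have hε0 : 0 < ε := by positivity
    have hlim : ∀ u : ℝ, 1 ≤ u →
        (t d / 2) * u ^ d + u ^ (d - 1) * ((t d / 2) * u - ∑ k ∈ Finset.Ico 1 d, |t k|)
          ≤ ∑ k ∈ Finset.Icc 1 d, t k * u ^ k := by
      intro u hu
      rw [← Finset.Ico_insert_right hd, Finset.sum_insert (by simp)]
      have h1 : -(u ^ (d - 1) * ∑ k ∈ Finset.Ico 1 d, |t k|)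
          ≤ ∑ k ∈ Finset.Ico 1 d, t k * u ^ k := by
        rw [Finset.mul_sum, ← Finset.sum_neg_distrib]
        refine Finset.sum_le_sum fun k hk => ?_
        have hk' := Finset.mem_Ico.1 hk
        have h2 : u ^ k ≤ u ^ (d - 1) := pow_le_pow_right₀ hu (by omega)
        have h3 : 0 ≤ u ^ k := by positivity
        have := neg_abs_le (t k)
        nlinarith [abs_nonneg (t k), mul_le_mul_of_nonneg_left h2 (abs_nonneg (t k))]
      have h4 : u ^ d = u ^ (d - 1) * u := by
        rw [← pow_succ]; congr 1; omega
      rw [h4]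
      nlinarith
    set B := max 1 ((∑ k ∈ Finset.Ico 1 d, |t k|) / ε) with hB
    obtain ⟨K, hK⟩ := (isCompact_Icc (a := (0 : ℝ)) (b := B)).bddAbove_image
      (f := fun u => ε * u - ∑ k ∈ Finset.Icc 1 d, t k * u ^ k) (by fun_prop)
    refine ⟨ε, hε0, max K 0, fun u hu => ?_⟩
    rcases le_total u B with h | h
    · have : ε * u - ∑ k ∈ Finset.Icc 1 d, t k * u ^ k ≤ K :=
        hK (mem_image_of_mem _ (⟨hu.le, h⟩ : u ∈ Icc 0 B))
      have h2 := le_max_left K 0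
      linarith
    · have hu1 : 1 ≤ u := (le_max_left _ _).trans h
      have h1 := hlim u hu1
      rw [← hε] at h1
      have h2 : (∑ k ∈ Finset.Ico 1 d, |t k|) ≤ ε * u := by
        have := (le_max_right 1 _).trans h
        rwa [div_le_iff₀ hε0, mul_comm] at this
      have h3 : u ≤ u ^ d := le_self_pow₀ hu1 (by omega)
      have h4 : 0 ≤ u ^ (d - 1) * (ε * u - ∑ k ∈ Finset.Ico 1 d, |t k|) :=
        mul_nonneg (by positivity) (by linarith)
      have h5 := le_max_right K 0
      have h6 : ε * u ≤ ε * u ^ d := by gcongr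
      linarith

/-- The one-variable majorant `u ^ s (1 + u) ^ m e ^ {-q(u)}`. -/
noncomputable def env (q : ℝ → ℝ) (s : ℝ) (m : ℕ) (u : ℝ) : ℝ :=
  u ^ s * (1 + u) ^ m * Real.exp (-q u)

lemma env_nonneg (q : ℝ → ℝ) (s : ℝ) (m : ℕ) {u : ℝ} (hu : 0 < u) : 0 ≤ env q s m u := by
  unfold env; positivity

/-- The exponential decay of `e ^ {-q}` absorbs the polynomial factor, uniformly in `s`. -/
lemma env_le {q q' : ℝ → ℝ} (h : IsConfining q q') (m : ℕ) :
    ∃ C : ℝ, ∃ δ : ℝ, 0 < δ ∧ ∀ s u : ℝ, 0 < u →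
      env q s m u ≤ C * (u ^ s * Real.exp (-δ * u)) := by
  obtain ⟨ε, hε, K, hK⟩ := h.lower
  refine ⟨(m.factorial / (ε / 2) ^ m) * Real.exp (ε / 2) * Real.exp K, ε / 2, by positivity,
    fun s u hu => ?_⟩
  have h1 : (1 + u) ^ m ≤ (m.factorial / (ε / 2) ^ m) * Real.exp (ε / 2 * (1 + u)) := by
    have := Real.pow_div_factorial_le_exp (ε / 2 * (1 + u)) (by positivity) m
    rw [mul_pow, div_le_iff₀ (by positivity)] at this
    rw [div_mul_eq_mul_div, le_div_iff₀ (by positivity)]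
    linarith
  have h2 : Real.exp (-q u) ≤ Real.exp (K - ε * u) := Real.exp_le_exp.2 (by linarith [hK u hu])
  calc env q s m u ≤ u ^ s * ((m.factorial / (ε / 2) ^ m) * Real.exp (ε / 2 * (1 + u)))
        * Real.exp (K - ε * u) := by unfold env; gcongr
    _ = _ := by
      have : Real.exp (ε / 2 * (1 + u)) * Real.exp (K - ε * u)
          = Real.exp (ε / 2) * Real.exp K * Real.exp (-(ε / 2) * u) := by
        rw [← Real.exp_add, ← Real.exp_add, ← Real.exp_add]; congr 1; ring
      linear_combination (u ^ s * (m.factorial / (ε / 2) ^ m)) * this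

lemma env_measurable {q q' : ℝ → ℝ} (h : IsConfining q q') (s : ℝ) (m : ℕ) :
    Measurable (env q s m) := by
  have := h.continuous.measurable
  unfold env; fun_prop

lemma env_integrable {q q' : ℝ → ℝ} (h : IsConfining q q') {s : ℝ} (hs : -1 < s) (m : ℕ) :
    IntegrableOn (env q s m) (Ioi 0) := by
  obtain ⟨C, δ, hδ, hC⟩ := env_le h m
  have h1 := (integrableOn_rpow_mul_exp_neg_mul_rpow hs one_pos hδ).const_mul C
  refine Integrable.mono' h1 (env_measurable h s m).aestronglyMeasurable ?_
  filter_upwards [ae_restrict_mem measurableSet_Ioi] with u hu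
  rw [Real.norm_of_nonneg (env_nonneg _ _ _ hu)]
  simpa using hC s u hu

lemma env_tendsto_atTop {q q' : ℝ → ℝ} (h : IsConfining q q') (s : ℝ) (m : ℕ) :
    Tendsto (env q s m) atTop (𝓝 0) := by
  obtain ⟨C, δ, hδ, hC⟩ := env_le h m
  have h1 := (tendsto_rpow_mul_exp_neg_mul_atTop_nhds_zero s δ hδ).const_mul C
  rw [mul_zero] at h1
  refine tendsto_of_tendsto_of_tendsto_of_le_of_le' tendsto_const_nhds h1 ?_ ?_
  · filter_upwards [eventually_gt_atTop 0] with u hu using env_nonneg _ _ _ hu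
  · filter_upwards [eventually_gt_atTop 0] with u hu using hC s u hu

lemma env_tendsto_zero {q q' : ℝ → ℝ} (h : IsConfining q q') {s : ℝ} (hs : 0 < s) (m : ℕ) :
    Tendsto (env q s m) (𝓝[>] 0) (𝓝 0) := by
  have h1 : ContinuousAt (env q s m) 0 := by
    unfold env
    have := h.continuous
    have h2 : ContinuousAt (fun u : ℝ => u ^ s) 0 := Real.continuousAt_rpow_const _ _ (Or.inr hs.le)
    fun_prop
  have h2 := h1.tendsto
  have : env q s m 0 = 0 := by simp [env, Real.zero_rpow hs.ne']
  rw [this] at h2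
  exact h2.mono_left nhdsWithin_le_nhds

/-! ### Integration by parts on the positive orthant -/

/-- Lebesgue measure on the orthant `(0, ∞) ^ n`, as a product measure. -/
noncomputable def orthant (n : ℕ) : Measure (Fin n → ℝ) :=
  Measure.pi fun _ => volume.restrict (Ioi 0)

instance (n : ℕ) : SigmaFinite (orthant n) := by unfold orthant; infer_instance

lemma orthant_eq (n : ℕ) :
    orthant n = (volume : Measure (Fin n → ℝ)).restrict (univ.pi fun _ => Ioi 0) := by
  rw [orthant, ← Measure.restrict_pi_pi, volume_pi]

lemma ae_orthant (n : ℕ) : ∀ᵐ x ∂orthant n, ∀ i, 0 < x i := by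
  rw [orthant_eq]
  filter_upwards [ae_restrict_mem (MeasurableSet.univ_pi fun _ => measurableSet_Ioi)] with x hx i
  exact hx i (mem_univ i)

/-- `F` need not vanish at `0` itself: only its one-sided limits at `0` and `∞` matter. -/
lemma integral_Ioi_eq_zero {F F' : ℝ → ℂ} (hd : ∀ u, 0 < u → HasDerivAt F (F' u) u)
    (hint : IntegrableOn F' (Ioi 0)) (h0 : Tendsto F (𝓝[>] 0) (𝓝 0))
    (h1 : Tendsto F atTop (𝓝 0)) : ∫ u in Ioi 0, F' u = 0 := by
  have key := integral_Ioi_of_hasDerivAt_of_tendsto (a := (0 : ℝ)) (f := Function.update F 0 0)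
    (f' := F') (m := 0) ?_ ?_ hint ?_
  · simpa using key
  · rw [continuousWithinAt_update_same]
    simpa using h0
  · intro u hu
    refine (hd u hu).congr_of_eventuallyEq ?_
    filter_upwards [lt_mem_nhds (mem_Ioi.1 hu)] with v hv
    simp [hv.ne', Function.update_of_ne]
  · refine h1.congr' ?_
    filter_upwards [eventually_gt_atTop 0] with v hv
    simp [hv.ne', Function.update_of_ne]

/-- Fubini together with the fundamental theorem of calculus in the variable `x_i`. -/
lemma integral_orthant_eq_zero {n : ℕ} (i : Fin n) {F F' : (Fin n → ℝ) → ℂ}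
    (hd : ∀ x, (∀ k, 0 < x k) →
      HasDerivAt (fun u => F (Function.update x i u)) (F' x) (x i))
    (hint : Integrable F' (orthant n))
    (h0 : ∀ x, (∀ k, 0 < x k) → Tendsto (fun u => F (Function.update x i u)) (𝓝[>] 0) (𝓝 0))
    (h1 : ∀ x, (∀ k, 0 < x k) → Tendsto (fun u => F (Function.update x i u)) atTop (𝓝 0)) :
    ∫ x, F' x ∂orthant n = 0 := by
  cases n with
  | zero => exact i.elim0
  | succ n =>
    have mp := (measurePreserving_piFinSuccAbove
      (fun _ : Fin (n + 1) => (volume : Measure ℝ).restrict (Ioi 0)) i).symm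
    have hint' := (mp.integrable_comp_emb (MeasurableEquiv.measurableEmbedding _)).2 hint
    rw [orthant, ← mp.integral_comp']
    refine (integral_prod_symm _ hint').trans ?_
    apply integral_eq_zero_of_ae
    filter_upwards [hint'.prod_left_ae, ae_orthant n] with x hx hpos
    have hp : ∀ u : ℝ, 0 < u → ∀ k, 0 < (i.insertNth u x : Fin (n + 1) → ℝ) k := by
      intro u hu k
      refine Fin.succAboveCases i ?_ (fun j => ?_) k
      · simpa using hu
      · simpa using hpos j
    have hup : ∀ u v : ℝ, Function.update (i.insertNth u x : Fin (n + 1) → ℝ) i v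
        = i.insertNth v x := fun u v => by simp
    refine integral_Ioi_eq_zero (F := fun u => F (i.insertNth u x)) ?_ hx ?_ ?_
    · intro u hu
      have := hd _ (hp u hu)
      simp only [hup] at this
      rw [Fin.insertNth_apply_same] at this
      exact this
    · have := h0 _ (hp 1 one_pos)
      simpa only [hup] using this
    · have := h1 _ (hp 1 one_pos)
      simpa only [hup] using this

/-! ### The Vandermonde product and the eigenvalue weight -/

/-- The Vandermonde product `∏_{i<j} (x_j - x_i)`. -/
noncomputable def vdm {n : ℕ} (x : Fin n → ℝ) : ℝ := ∏ i, ∏ j ∈ Finset.Ioi i, (x j - x i)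

/-- The pairs `i < j` of indices. -/
def pairs (n : ℕ) : Finset (Fin n × Fin n) := Finset.univ.filter fun p => p.1 < p.2

lemma prod_pairs {n : ℕ} {M : Type*} [CommMonoid M] (f : Fin n → Fin n → M) :
    ∏ i, ∏ j ∈ Finset.Ioi i, f i j = ∏ p ∈ pairs n, f p.1 p.2 := by
  rw [pairs, Finset.prod_filter, ← Finset.univ_product_univ, Finset.prod_product]
  refine Finset.prod_congr rfl fun i _ => ?_
  rw [← Finset.prod_filter]
  congr 1; ext j; simp

lemma vdm_eq {n : ℕ} (x : Fin n → ℝ) : vdm x = ∏ p ∈ pairs n, (x p.2 - x p.1) :=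
  prod_pairs fun i j => x j - x i

lemma abs_vdm_perm {n : ℕ} (x : Fin n → ℝ) (σ : Equiv.Perm (Fin n)) :
    |vdm (x ∘ σ)| = |vdm x| := by
  have h : ∀ v : Fin n → ℝ, vdm v = (Matrix.vandermonde v).det := fun v =>
    (Matrix.det_vandermonde v).symm
  have h2 : Matrix.vandermonde (x ∘ σ) = (Matrix.vandermonde x).submatrix σ id := by
    ext i j; simp [Matrix.vandermonde_apply]
  rw [h, h, h2, Matrix.det_permute, abs_mul]
  rcases Int.units_eq_one_or (Equiv.Perm.sign σ) with h | h <;> simp [h]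

/-- For points sorted the same way, every pair of indices satisfies
`|x_i - x_j| |y_i - y_j| ≤ (x_i + y_j) (x_j + y_i)`, so the Cauchy double product beats both
Vandermonde products up to its diagonal. -/
lemma vdm_mul_le_of_monotone {n : ℕ} {x y : Fin n → ℝ} (hx : ∀ i, 0 < x i) (hy : ∀ i, 0 < y i)
    (mx : Monotone x) (my : Monotone y) :
    |vdm x| * |vdm y| * ∏ i, ∏ j, (x i + y j)⁻¹ ≤ ∏ i, (x i + y i)⁻¹ := by
  have split : ∏ i, ∏ j, (x i + y j)⁻¹
      = (∏ i, (x i + y i)⁻¹) * ∏ p ∈ pairs n, ((x p.2 + y p.1)⁻¹ * (x p.1 + y p.2)⁻¹) := by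
    rw [← prod_pairs fun i j => (x j + y i)⁻¹ * (x i + y j)⁻¹,
      Finset.prod_prod_Ioi_mul_eq_prod_prod_off_diag fun j i => (x j + y i)⁻¹,
      ← Finset.prod_mul_distrib, Finset.prod_comm]
    refine Finset.prod_congr rfl fun i _ => ?_
    rw [Fintype.prod_eq_mul_prod_compl i]
  rw [split, vdm_eq, vdm_eq, Finset.abs_prod, Finset.abs_prod, mul_left_comm,
    ← Finset.prod_mul_distrib, ← Finset.prod_mul_distrib]
  refine mul_le_of_le_one_right (Finset.prod_nonneg fun i _ => ?_) (Finset.prod_le_one ?_ ?_)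
  · have := hx i; have := hy i; positivity
  · intro p _
    have := hx p.1; have := hy p.1; have := hx p.2; have := hy p.2; positivity
  · intro p hp
    have hlt : p.1 ≤ p.2 := (Finset.mem_filter.1 hp).2.le
    have h1 := hx p.1; have h2 := hy p.1; have h3 := hx p.2; have h4 := hy p.2
    rw [← mul_inv, mul_inv_le_iff₀ (by positivity), one_mul,
      abs_of_nonneg (sub_nonneg.2 (mx hlt)), abs_of_nonneg (sub_nonneg.2 (my hlt))]
    exact mul_le_mul (by linarith) (by linarith) (sub_nonneg.2 (my hlt)) (by positivity)

lemma inv_add_le {u v α : ℝ} (hu : 0 < u) (hv : 0 < v) (h0 : 0 ≤ α) (h1 : α ≤ 1) :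
    (u + v)⁻¹ ≤ u ^ (-α) * v ^ (-(1 - α)) := by
  rw [Real.rpow_neg hu.le, Real.rpow_neg hv.le, ← mul_inv]
  refine inv_anti₀ (by positivity) ?_
  have := Real.geom_mean_le_arith_mean2_weighted h0 (sub_nonneg.2 h1) hu.le hv.le (by ring)
  nlinarith

/-- Sorting both families reduces to `vdm_mul_le_of_monotone`; the weighted arithmetic-geometric
inequality then separates the variables. -/
lemma vdm_mul_le {n : ℕ} {x y : Fin n → ℝ} (hx : ∀ i, 0 < x i) (hy : ∀ i, 0 < y i)
    {α : ℝ} (h0 : 0 ≤ α) (h1 : α ≤ 1) :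
    |vdm x| * |vdm y| * ∏ i, ∏ j, (x i + y j)⁻¹
      ≤ (∏ i, x i ^ (-α)) * ∏ i, y i ^ (-(1 - α)) := by
  have key := vdm_mul_le_of_monotone (x := x ∘ Tuple.sort x) (y := y ∘ Tuple.sort y)
    (fun i => hx (Tuple.sort x i)) (fun i => hy (Tuple.sort y i))
    (Tuple.monotone_sort x) (Tuple.monotone_sort y)
  rw [abs_vdm_perm, abs_vdm_perm] at key
  simp only [Function.comp_apply] at key
  rw [Equiv.prod_comp (Tuple.sort x) fun i => ∏ j, (x i + y (Tuple.sort y j))⁻¹] at key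
  simp only [fun i => Equiv.prod_comp (Tuple.sort y) fun j => (x i + y j)⁻¹] at key
  refine key.trans ?_
  rw [← Equiv.prod_comp (Tuple.sort x) fun i => x i ^ (-α),
    ← Equiv.prod_comp (Tuple.sort y) fun i => y i ^ (-(1 - α)), ← Finset.prod_mul_distrib]
  refine Finset.prod_le_prod (fun i _ => ?_) fun i _ => inv_add_le (hx _) (hy _) h0 h1
  have := hx (Tuple.sort x i); have := hy (Tuple.sort y i); positivity

/-- `∏ (1 + x_k)`, the basic polynomial majorant. -/
noncomputable def qmaj {n : ℕ} (x : Fin n → ℝ) : ℝ := ∏ k, (1 + x k)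

lemma one_add_le_qmaj {n : ℕ} {x : Fin n → ℝ} (hx : ∀ i, 0 < x i) (i : Fin n) :
    1 + x i ≤ qmaj x := by
  rw [qmaj, ← Finset.mul_prod_erase _ _ (Finset.mem_univ i)]
  refine le_mul_of_one_le_right (by linarith [hx i]) ?_
  exact Finset.one_le_prod fun k _ => by linarith [hx k]

lemma one_le_qmaj {n : ℕ} {x : Fin n → ℝ} (hx : ∀ i, 0 < x i) : 1 ≤ qmaj x :=
  Finset.one_le_prod fun k _ => by linarith [hx k]

lemma abs_sub_le_qmaj {n : ℕ} {x : Fin n → ℝ} (hx : ∀ i, 0 < x i) (i j : Fin n) :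
    |x i - x j| ≤ qmaj x := by
  have h1 := one_add_le_qmaj hx i
  have h2 := one_add_le_qmaj hx j
  have := hx i; have := hx j
  rw [abs_le]; constructor <;> linarith

lemma abs_vdm_le {n : ℕ} {x : Fin n → ℝ} (hx : ∀ i, 0 < x i) :
    |vdm x| ≤ qmaj x ^ (pairs n).card := by
  rw [vdm_eq, Finset.abs_prod]
  exact (Finset.prod_le_prod (fun _ _ => abs_nonneg _)
    fun p _ => abs_sub_le_qmaj hx _ _).trans_eq (Finset.prod_const _)

/-- A pole on the diagonal is cancelled by the corresponding Vandermonde factor. -/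
lemma abs_inv_mul_vdm_le {n : ℕ} {x : Fin n → ℝ} (hx : ∀ i, 0 < x i) {p : Fin n × Fin n}
    (hp : p ∈ pairs n) :
    |(x p.2 - x p.1)⁻¹| * |vdm x| ≤ qmaj x ^ (pairs n).card := by
  have hQ := one_le_qmaj hx
  rw [vdm_eq, ← Finset.mul_prod_erase _ _ hp, abs_mul, ← mul_assoc, ← abs_mul]
  have h1 : |(x p.2 - x p.1)⁻¹ * (x p.2 - x p.1)| ≤ 1 := by
    by_cases h : x p.2 - x p.1 = 0
    · simp [h]
    · rw [inv_mul_cancel₀ h, abs_one]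
  have h2 : |∏ q ∈ (pairs n).erase p, (x q.2 - x q.1)| ≤ qmaj x ^ (pairs n).card := by
    rw [Finset.abs_prod]
    refine ((Finset.prod_le_prod (fun _ _ => abs_nonneg _)
      fun q _ => abs_sub_le_qmaj hx q.2 q.1).trans_eq (Finset.prod_const _)).trans ?_
    exact pow_le_pow_right₀ hQ (Finset.card_le_card (Finset.erase_subset _ _))
  calc _ ≤ 1 * qmaj x ^ (pairs n).card := by gcongr
    _ = _ := one_mul _

/-- The Cauchy eigenvalue weight for the potentials `-a ln u + q(u)` and `-b ln v + r(v)`. -/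
noncomputable def wt {n : ℕ} (a b : ℝ) (q r : ℝ → ℝ) (p : (Fin n → ℝ) × (Fin n → ℝ)) : ℝ :=
  vdm p.1 ^ 2 * vdm p.2 ^ 2 *
    Real.exp (-∑ i, ((-a * Real.log (p.1 i) + q (p.1 i)) + (-b * Real.log (p.2 i) + r (p.2 i)))) *
    ∏ i, ∏ j, (p.1 i + p.2 j)⁻¹

lemma wt_swap {n : ℕ} (a b : ℝ) (q r : ℝ → ℝ) (p : (Fin n → ℝ) × (Fin n → ℝ)) :
    wt a b q r p.swap = wt b a r q p := by
  unfold wt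
  rw [Finset.prod_comm]
  simp only [Prod.fst_swap, Prod.snd_swap]
  simp_rw [add_comm (p.2 _) (p.1 _)]
  congr 1
  rw [mul_comm (vdm p.2 ^ 2)]
  congr 3
  exact Finset.sum_congr rfl fun i _ => add_comm _ _

lemma exp_pot {n : ℕ} (a : ℝ) (q : ℝ → ℝ) {x : Fin n → ℝ} (hx : ∀ i, 0 < x i) :
    Real.exp (-∑ i, (-a * Real.log (x i) + q (x i))) = ∏ i, (x i ^ a * Real.exp (-q (x i))) := by
  rw [← Finset.sum_neg_distrib, Real.exp_sum]
  refine Finset.prod_congr rfl fun i _ => ?_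
  rw [Real.rpow_def_of_pos (hx i), ← Real.exp_add]
  congr 1; ring

lemma wt_nonneg {n : ℕ} (a b : ℝ) (q r : ℝ → ℝ) {p : (Fin n → ℝ) × (Fin n → ℝ)}
    (hx : ∀ i, 0 < p.1 i) (hy : ∀ i, 0 < p.2 i) : 0 ≤ wt a b q r p := by
  unfold wt
  refine mul_nonneg (by positivity) (Finset.prod_nonneg fun i _ => Finset.prod_nonneg fun j _ => ?_)
  have := hx i; have := hy j; positivity

/-- One Vandermonde factor of the weight may absorb a singular prefactor `t`; everything else
is bounded by a product of one-variable functions. -/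
lemma mul_wt_le {n : ℕ} (a b : ℝ) (q r : ℝ → ℝ) {p : (Fin n → ℝ) × (Fin n → ℝ)}
    (hx : ∀ i, 0 < p.1 i) (hy : ∀ i, 0 < p.2 i) {α : ℝ} (h0 : 0 ≤ α) (h1 : α ≤ 1)
    {t B : ℝ} (hB : t * |vdm p.1| ≤ B) (hB0 : 0 ≤ B) :
    t * wt a b q r p ≤ B * ((∏ i, env q (a - α) 0 (p.1 i)) *
      ∏ i, env r (b - (1 - α)) (pairs n).card (p.2 i)) := by
  set x := p.1
  set y := p.2
  set K := (pairs n).card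
  have e1 : t * wt a b q r p = (t * |vdm x|) * ((|vdm x| * |vdm y| * ∏ i, ∏ j, (x i + y j)⁻¹)
      * (|vdm y| * ((∏ i, (x i ^ a * Real.exp (-q (x i)))) *
        ∏ i, (y i ^ b * Real.exp (-r (y i)))))) := by
    rw [← exp_pot a q hx, ← exp_pot b r hy, ← Real.exp_add, ← neg_add, ← Finset.sum_add_distrib,
      wt, ← sq_abs (vdm p.1), ← sq_abs (vdm p.2)]
    ring
  have e2 : ∏ i, env q (a - α) 0 (x i)
      = (∏ i, x i ^ (-α)) * ∏ i, (x i ^ a * Real.exp (-q (x i))) := by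
    rw [← Finset.prod_mul_distrib]
    refine Finset.prod_congr rfl fun i _ => ?_
    rw [env, pow_zero, mul_one, ← mul_assoc, ← Real.rpow_add (hx i)]
    congr 2; ring
  have e3 : ∏ i, env r (b - (1 - α)) K (y i)
      = (∏ i, y i ^ (-(1 - α))) * (qmaj y ^ K * ∏ i, (y i ^ b * Real.exp (-r (y i)))) := by
    rw [qmaj, ← Finset.prod_pow, ← Finset.prod_mul_distrib, ← Finset.prod_mul_distrib]
    refine Finset.prod_congr rfl fun i _ => ?_
    have : y i ^ (b - (1 - α)) = y i ^ (-(1 - α)) * y i ^ b := by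
      rw [← Real.rpow_add (hy i)]; congr 1; ring
    rw [env, this]; ring
  have n1 : 0 ≤ ∏ i, (x i ^ a * Real.exp (-q (x i))) :=
    Finset.prod_nonneg fun i _ => by have := hx i; positivity
  have n2 : 0 ≤ ∏ i, (y i ^ b * Real.exp (-r (y i))) :=
    Finset.prod_nonneg fun i _ => by have := hy i; positivity
  have n3 : 0 ≤ ∏ i, ∏ j, (x i + y j)⁻¹ :=
    Finset.prod_nonneg fun i _ => Finset.prod_nonneg fun j _ => by
      have := hx i; have := hy j; positivity
  have n4 : 0 ≤ (∏ i, x i ^ (-α)) * ∏ i, y i ^ (-(1 - α)) :=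
    mul_nonneg (Finset.prod_nonneg fun i _ => by have := hx i; positivity)
      (Finset.prod_nonneg fun i _ => by have := hy i; positivity)
  have c1 := vdm_mul_le hx hy h0 h1
  have c2 := abs_vdm_le hy
  rw [e1]
  calc _ ≤ B * (((∏ i, x i ^ (-α)) * ∏ i, y i ^ (-(1 - α))) *
        (qmaj y ^ K * ((∏ i, (x i ^ a * Real.exp (-q (x i)))) *
        ∏ i, (y i ^ b * Real.exp (-r (y i)))))) := by gcongr
    _ = _ := by rw [e2, e3]; ring

/-! ### Logarithmic derivative of the weight -/

lemma hasDerivAt_update_apply {n : ℕ} (x : Fin n → ℝ) (i k : Fin n) (v : ℝ) :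
    HasDerivAt (fun u => Function.update x i u k) (if k = i then 1 else 0) v := by
  by_cases h : k = i
  · subst h; simpa using hasDerivAt_id' v
  · simpa [h] using hasDerivAt_const v (x k)

/-- Logarithmic derivatives add up over a product, also where factors vanish. -/
lemma hasDerivAt_prod_log {ι : Type*} [DecidableEq ι] (s : Finset ι) {f : ι → ℝ → ℝ} {l : ι → ℝ}
    {v : ℝ} (h : ∀ k ∈ s, HasDerivAt (f k) (f k v * l k) v) :
    HasDerivAt (fun u => ∏ k ∈ s, f k u) ((∏ k ∈ s, f k v) * ∑ k ∈ s, l k) v := by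
  refine (HasDerivAt.fun_finsetProd h).congr_deriv ?_
  rw [Finset.mul_sum]
  refine Finset.sum_congr rfl fun k hk => ?_
  rw [smul_eq_mul, ← mul_assoc, Finset.prod_erase_mul _ _ hk]

lemma hasDerivAt_mul_log {f g : ℝ → ℝ} {l m v : ℝ} (hf : HasDerivAt f (f v * l) v)
    (hg : HasDerivAt g (g v * m) v) :
    HasDerivAt (fun u => f u * g u) (f v * g v * (l + m)) v :=
  (hf.mul hg).congr_deriv (by ring)

/-- The `x_i`-derivative of `2 ln |Δ(x)|`, a sum over pairs of indices. -/
noncomputable def vdmLog {n : ℕ} (i : Fin n) (x : Fin n → ℝ) : ℝ :=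
  ∑ p ∈ pairs n,
    2 * ((if p.2 = i then 1 else 0) - (if p.1 = i then 1 else 0)) * (x p.2 - x p.1)⁻¹

/-- The `x_i`-derivative of the logarithm of the weight. -/
noncomputable def wtLog {n : ℕ} (a : ℝ) (q' : ℝ → ℝ) (i : Fin n)
    (p : (Fin n → ℝ) × (Fin n → ℝ)) : ℝ :=
  vdmLog i p.1 + (a * (p.1 i)⁻¹ - q' (p.1 i)) - ∑ j, (p.1 i + p.2 j)⁻¹

lemma hasDerivAt_vdm_sq {n : ℕ} (x : Fin n → ℝ) (i : Fin n) :
    HasDerivAt (fun u => vdm (Function.update x i u) ^ 2) (vdm x ^ 2 * vdmLog i x) (x i) := by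
  have := hasDerivAt_prod_log (pairs n) (v := x i)
    (f := fun p u => (Function.update x i u p.2 - Function.update x i u p.1) ^ 2)
    (l := fun p => 2 * ((if p.2 = i then 1 else 0) - (if p.1 = i then 1 else 0)) *
      (x p.2 - x p.1)⁻¹) ?_
  · simp only [Function.update_eq_self, Finset.prod_pow, ← vdm_eq] at this
    exact this
  · intro p _
    have h := ((hasDerivAt_update_apply x i p.2 (x i)).sub
      (hasDerivAt_update_apply x i p.1 (x i))).pow 2
    refine h.congr_deriv ?_
    simp only [Function.update_eq_self, Pi.sub_apply]
    -- where two points collide both sides vanish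
    by_cases h0 : x p.2 - x p.1 = 0
    · simp [h0]
    · field_simp; simp; ring

lemma hasDerivAt_wt {n : ℕ} {a b : ℝ} {q r q' : ℝ → ℝ} (hq : ∀ u, HasDerivAt q (q' u) u)
    {p : (Fin n → ℝ) × (Fin n → ℝ)} (hx : ∀ i, 0 < p.1 i) (hy : ∀ i, 0 < p.2 i) (i : Fin n) :
    HasDerivAt (fun u => wt a b q r (Function.update p.1 i u, p.2))
      (wt a b q r p * wtLog a q' i p) (p.1 i) := by
  obtain ⟨x, y⟩ := p
  simp only at hx hy ⊢
  have h1 := hasDerivAt_vdm_sq x i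
  have h2 : HasDerivAt (fun _ : ℝ => vdm y ^ 2) (vdm y ^ 2 * 0) (x i) := by
    simpa using hasDerivAt_const (x i) (vdm y ^ 2)
  have h3 : HasDerivAt (fun u => Real.exp (-∑ k, ((-a * Real.log (Function.update x i u k)
        + q (Function.update x i u k)) + (-b * Real.log (y k) + r (y k)))))
      (Real.exp (-∑ k, ((-a * Real.log (x k) + q (x k)) + (-b * Real.log (y k) + r (y k))))
        * (a * (x i)⁻¹ - q' (x i))) (x i) := by
    have hk : ∀ k ∈ Finset.univ, HasDerivAt (fun u => (-a * Real.log (Function.update x i u k)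
        + q (Function.update x i u k)) + (-b * Real.log (y k) + r (y k)))
        (if k = i then -a * (x i)⁻¹ + q' (x i) else 0) (x i) := by
      intro k _
      by_cases h : k = i
      · subst h
        simp only [Function.update_self, if_true]
        exact (((Real.hasDerivAt_log (hx k).ne').const_mul (-a)).add (hq (x k))).add_const _
      · simpa [h] using hasDerivAt_const (x i) _
    have := (HasDerivAt.fun_sum hk).fun_neg.exp
    simp only [Function.update_eq_self, Finset.sum_ite_eq', Finset.mem_univ, if_true] at this
    exact this.congr_deriv (by ring)
  have h4 : HasDerivAt (fun u => ∏ k, ∏ j, (Function.update x i u k + y j)⁻¹)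
      ((∏ k, ∏ j, (x k + y j)⁻¹) * -∑ j, (x i + y j)⁻¹) (x i) := by
    have := hasDerivAt_prod_log Finset.univ (v := x i)
      (f := fun k u => ∏ j, (Function.update x i u k + y j)⁻¹)
      (l := fun k => ∑ j, if k = i then -(x k + y j)⁻¹ else 0) ?_
    · simp only [Function.update_eq_self] at this
      refine this.congr_deriv ?_
      rw [Finset.sum_comm]
      simp
    · intro k _
      have := hasDerivAt_prod_log Finset.univ (v := x i)
        (f := fun j u => (Function.update x i u k + y j)⁻¹)
        (l := fun j => if k = i then -(x k + y j)⁻¹ else 0) ?_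
      · exact this
      · intro j _
        have hne : x k + y j ≠ 0 := (add_pos (hx k) (hy j)).ne'
        have := ((hasDerivAt_update_apply x i k (x i)).add_const (y j)).fun_inv (by simpa using hne)
        refine this.congr_deriv ?_
        simp only [Function.update_eq_self]
        split_ifs
        · field_simp
        · simp
  have h := hasDerivAt_mul_log (hasDerivAt_mul_log
    (hasDerivAt_mul_log (f := fun u => vdm (Function.update x i u) ^ 2)
      (g := fun _ => vdm y ^ 2) (l := vdmLog i x) (m := 0) ?_ h2)
    (g := fun u => Real.exp (-∑ k, ((-a * Real.log (Function.update x i u k)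
        + q (Function.update x i u k)) + (-b * Real.log (y k) + r (y k)))))
    (m := a * (x i)⁻¹ - q' (x i)) ?_)
    (g := fun u => ∏ k, ∏ j, (Function.update x i u k + y j)⁻¹) (m := -∑ j, (x i + y j)⁻¹) ?_
  · refine h.congr_deriv ?_
    simp only [Function.update_eq_self, wt, wtLog]
    ring
  · simpa using h1
  · simpa using h3
  · simpa using h4

/-! ### Integrability against the weight -/

/-- The product measure on `(0, ∞) ^ n × (0, ∞) ^ n`. -/
noncomputable def orth2 (n : ℕ) : Measure ((Fin n → ℝ) × (Fin n → ℝ)) :=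
  (orthant n).prod (orthant n)

instance (n : ℕ) : SFinite (orth2 n) := by unfold orth2; infer_instance

lemma orth2_eq (n : ℕ) : orth2 n =
    (volume : Measure ((Fin n → ℝ) × (Fin n → ℝ))).restrict
      {p | (∀ i, 0 < p.1 i) ∧ ∀ j, 0 < p.2 j} := by
  rw [orth2, orthant_eq, Measure.prod_restrict]
  congr 1
  ext p; simp [Set.mem_pi]

lemma ae_orth2 (n : ℕ) : ∀ᵐ p ∂orth2 n, (∀ i, 0 < p.1 i) ∧ ∀ j, 0 < p.2 j := by
  have e : {p : (Fin n → ℝ) × (Fin n → ℝ) | (∀ i, 0 < p.1 i) ∧ ∀ j, 0 < p.2 j}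
      = (univ.pi fun _ => Ioi 0) ×ˢ (univ.pi fun _ => Ioi 0) := by
    ext p; simp [Set.mem_pi]
  have hm : MeasurableSet {p : (Fin n → ℝ) × (Fin n → ℝ) | (∀ i, 0 < p.1 i) ∧ ∀ j, 0 < p.2 j} := by
    rw [e]
    exact (MeasurableSet.univ_pi fun _ => measurableSet_Ioi).prod
      (MeasurableSet.univ_pi fun _ => measurableSet_Ioi)
  rw [orth2_eq]
  exact ae_restrict_mem hm

lemma measurable_vdm {n : ℕ} : Measurable (vdm : (Fin n → ℝ) → ℝ) := by
  unfold vdm; fun_prop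

lemma measurable_wt {n : ℕ} {a b : ℝ} {q r : ℝ → ℝ} (hq : Continuous q) (hr : Continuous r) :
    Measurable (wt a b q r : (Fin n → ℝ) × (Fin n → ℝ) → ℝ) := by
  have := hq.measurable
  have := hr.measurable
  have := measurable_vdm (n := n)
  unfold wt
  fun_prop

/-- Measurable functions whose singularities are at most a simple pole at the walls `x_i = 0`
and a pole absorbed by one Vandermonde factor, with polynomial growth in `x`. -/
structure Tame {n : ℕ} (θ : (Fin n → ℝ) × (Fin n → ℝ) → ℂ) : Prop where
  meas : Measurable θ
  bound : ∃ C : ℝ, 0 ≤ C ∧ ∃ k : ℕ, ∀ p : (Fin n → ℝ) × (Fin n → ℝ),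
    (∀ i, 0 < p.1 i) → (∀ j, 0 < p.2 j) →
      ‖θ p‖ * |vdm p.1| ≤ C * (qmaj p.1 ^ k * ∏ i, (p.1 i)⁻¹)

lemma prod_inv_nonneg {n : ℕ} {x : Fin n → ℝ} (hx : ∀ i, 0 < x i) : 0 ≤ ∏ i, (x i)⁻¹ :=
  Finset.prod_nonneg fun i _ => (inv_pos.2 (hx i)).le

lemma inv_le_qmaj {n : ℕ} {x : Fin n → ℝ} (hx : ∀ i, 0 < x i) (i : Fin n) :
    (x i)⁻¹ ≤ qmaj x * ∏ i, (x i)⁻¹ := by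
  rw [qmaj, ← Finset.prod_mul_distrib, ← Finset.mul_prod_erase _ _ (Finset.mem_univ i)]
  have h1 : ∀ k, 1 ≤ (1 + x k) * (x k)⁻¹ := fun k => by
    have := hx k; rw [← div_eq_mul_inv, one_le_div this]; linarith
  have h2 : 1 ≤ ∏ k ∈ Finset.univ.erase i, (1 + x k) * (x k)⁻¹ :=
    Finset.one_le_prod fun k _ => h1 k
  have := hx i
  calc (x i)⁻¹ ≤ (1 + x i) * (x i)⁻¹ := by
        have := inv_pos.2 this; nlinarith
    _ ≤ _ := le_mul_of_one_le_right (by positivity) h2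

lemma one_le_qmaj_mul {n : ℕ} {x : Fin n → ℝ} (hx : ∀ i, 0 < x i) :
    1 ≤ qmaj x * ∏ i, (x i)⁻¹ := by
  rw [qmaj, ← Finset.prod_mul_distrib]
  refine Finset.one_le_prod fun k _ => ?_
  have := hx k; rw [← div_eq_mul_inv, one_le_div this]; linarith

lemma Tame.of_bound {n : ℕ} {θ : (Fin n → ℝ) × (Fin n → ℝ) → ℂ} (hm : Measurable θ)
    (C : ℝ) (hC : 0 ≤ C) (k : ℕ) (h : ∀ p : (Fin n → ℝ) × (Fin n → ℝ),
      (∀ i, 0 < p.1 i) → (∀ j, 0 < p.2 j) → ‖θ p‖ ≤ C * (qmaj p.1 ^ k * ∏ i, (p.1 i)⁻¹)) :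
    Tame θ := by
  refine ⟨hm, C, hC, k + (pairs n).card, fun p hx hy => ?_⟩
  have h1 := h p hx hy
  have h2 := abs_vdm_le hx
  have h3 := prod_inv_nonneg hx
  have h4 := one_le_qmaj hx
  calc _ ≤ (C * (qmaj p.1 ^ k * ∏ i, (p.1 i)⁻¹)) * qmaj p.1 ^ (pairs n).card := by gcongr
    _ = _ := by rw [pow_add]; ring

lemma Tame.of_bounded {n : ℕ} {θ : (Fin n → ℝ) × (Fin n → ℝ) → ℂ} (hm : Measurable θ)
    (C : ℝ) (h : ∀ p : (Fin n → ℝ) × (Fin n → ℝ),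
      (∀ i, 0 < p.1 i) → (∀ j, 0 < p.2 j) → ‖θ p‖ ≤ C) : Tame θ := by
  refine Tame.of_bound hm |C| (abs_nonneg _) 1 fun p hx hy => ?_
  have := one_le_qmaj_mul hx
  rw [pow_one]
  exact ((h p hx hy).trans (le_abs_self C)).trans (le_mul_of_one_le_right (abs_nonneg _) this)

lemma Tame.add {n : ℕ} {θ η : (Fin n → ℝ) × (Fin n → ℝ) → ℂ} (h1 : Tame θ) (h2 : Tame η) :
    Tame fun p => θ p + η p := by
  obtain ⟨m1, C1, hC1, k1, b1⟩ := h1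
  obtain ⟨m2, C2, hC2, k2, b2⟩ := h2
  refine ⟨m1.add m2, C1 + C2, by positivity, max k1 k2, fun p hx hy => ?_⟩
  have hQ := one_le_qmaj hx
  have h3 := prod_inv_nonneg hx
  have q1 : qmaj p.1 ^ k1 ≤ qmaj p.1 ^ max k1 k2 := pow_le_pow_right₀ hQ (le_max_left _ _)
  have q2 : qmaj p.1 ^ k2 ≤ qmaj p.1 ^ max k1 k2 := pow_le_pow_right₀ hQ (le_max_right _ _)
  calc ‖θ p + η p‖ * |vdm p.1| ≤ (‖θ p‖ + ‖η p‖) * |vdm p.1| := by gcongr; exact norm_add_le _ _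
    _ = ‖θ p‖ * |vdm p.1| + ‖η p‖ * |vdm p.1| := add_mul _ _ _
    _ ≤ C1 * (qmaj p.1 ^ k1 * ∏ i, (p.1 i)⁻¹) + C2 * (qmaj p.1 ^ k2 * ∏ i, (p.1 i)⁻¹) :=
      add_le_add (b1 p hx hy) (b2 p hx hy)
    _ ≤ C1 * (qmaj p.1 ^ max k1 k2 * ∏ i, (p.1 i)⁻¹)
        + C2 * (qmaj p.1 ^ max k1 k2 * ∏ i, (p.1 i)⁻¹) := by gcongr
    _ = _ := by ring

lemma Tame.bounded_mul {n : ℕ} {θ η : (Fin n → ℝ) × (Fin n → ℝ) → ℂ} (h2 : Tame η)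
    (hm : Measurable θ) {B : ℝ} (hB : 0 ≤ B) (h : ∀ p : (Fin n → ℝ) × (Fin n → ℝ),
      (∀ i, 0 < p.1 i) → (∀ j, 0 < p.2 j) → ‖θ p‖ ≤ B) :
    Tame fun p => θ p * η p := by
  obtain ⟨m2, C2, hC2, k2, b2⟩ := h2
  refine ⟨hm.mul m2, B * C2, by positivity, k2, fun p hx hy => ?_⟩
  rw [norm_mul, mul_assoc, mul_assoc]
  exact mul_le_mul (h p hx hy) (b2 p hx hy) (by positivity) hB

lemma Tame.const_mul {n : ℕ} {η : (Fin n → ℝ) × (Fin n → ℝ) → ℂ} (h : Tame η) (c : ℂ) :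
    Tame fun p => c * η p :=
  h.bounded_mul measurable_const (norm_nonneg c) fun _ _ _ => le_rfl

lemma Tame.sum {n : ℕ} {ι : Type*} (s : Finset ι) {θ : ι → (Fin n → ℝ) × (Fin n → ℝ) → ℂ}
    (h : ∀ i ∈ s, Tame (θ i)) : Tame fun p => ∑ i ∈ s, θ i p := by
  classical
  induction s using Finset.induction_on with
  | empty => simpa using Tame.of_bounded (n := n) (measurable_const (a := (0 : ℂ))) 0 (by simp)
  | insert i s hi ih =>
    simp only [Finset.sum_insert hi]
    exact (h i (by simp)).add (ih fun j hj => h j (by simp [hj]))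

lemma tame_wtLog {n : ℕ} (a : ℝ) {q q' : ℝ → ℝ} (hq : IsConfining q q') (i : Fin n) :
    Tame fun p => (wtLog a q' i p : ℂ) := by
  have hqm := hq.meas
  have t1 : Tame fun p : (Fin n → ℝ) × (Fin n → ℝ) => (vdmLog i p.1 : ℂ) := by
    unfold vdmLog
    push_cast
    refine Tame.sum _ fun pr hpr => Tame.const_mul ?_ _
    refine ⟨by fun_prop, 1, zero_le_one, (pairs n).card + 1, fun p hx hy => ?_⟩
    have h1 := abs_inv_mul_vdm_le hx hpr
    have h2 := one_le_qmaj_mul hx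
    have h3 : 0 ≤ qmaj p.1 ^ (pairs n).card := by have := one_le_qmaj hx; positivity
    have h4 : ‖((p.1 pr.2 : ℂ) - (p.1 pr.1 : ℂ))⁻¹‖ = |(p.1 pr.2 - p.1 pr.1)⁻¹| := by
      rw [← Real.norm_eq_abs, ← Complex.norm_real]; push_cast; rfl
    rw [h4, one_mul, pow_succ, mul_assoc]
    exact h1.trans (le_mul_of_one_le_right h3 h2)
  have t2 : Tame fun p : (Fin n → ℝ) × (Fin n → ℝ) => (((p.1 i)⁻¹ : ℝ) : ℂ) := by
    refine Tame.of_bound (by fun_prop) 1 zero_le_one 1 fun p hx hy => ?_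
    rw [Complex.norm_real, Real.norm_of_nonneg (inv_pos.2 (hx i)).le, one_mul, pow_one]
    exact inv_le_qmaj hx i
  have t3 : Tame fun p : (Fin n → ℝ) × (Fin n → ℝ) => ((q' (p.1 i) : ℝ) : ℂ) := by
    obtain ⟨C, hC, m, hb⟩ := hq.growth
    refine Tame.of_bound (by fun_prop) C hC (m + 1) fun p hx hy => ?_
    rw [Complex.norm_real, Real.norm_eq_abs]
    refine (hb _ (hx i)).trans ?_
    have h1 := one_add_le_qmaj hx i
    have h2 := one_le_qmaj_mul hx
    have h3 : 0 ≤ qmaj p.1 ^ m := by have := one_le_qmaj hx; positivity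
    have h5 := hx i
    rw [pow_succ, mul_assoc]
    gcongr
    exact (pow_le_pow_left₀ (by positivity) h1 m).trans (le_mul_of_one_le_right h3 h2)
  have t4 : ∀ j, Tame fun p : (Fin n → ℝ) × (Fin n → ℝ) => (((p.1 i + p.2 j)⁻¹ : ℝ) : ℂ) := by
    intro j
    refine Tame.of_bound (by fun_prop) 1 zero_le_one 1 fun p hx hy => ?_
    have h1 := hx i
    have h2 := hy j
    rw [Complex.norm_real, Real.norm_of_nonneg (by positivity), one_mul, pow_one]
    exact (inv_anti₀ h1 (by linarith)).trans (inv_le_qmaj hx i)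
  have := (t1.add ((t2.const_mul a).add (t3.const_mul (-1)))).add
    ((Tame.sum Finset.univ fun j _ => t4 j).const_mul (-1))
  convert this using 2 with p
  unfold wtLog; push_cast; ring

/-- The separated majorant of `mul_wt_le` is integrable on `(0, ∞) ^ n × (0, ∞) ^ n`. -/
lemma Tame.integrable {n : ℕ} {a b : ℝ} {q q' r r' : ℝ → ℝ} (ha : 0 < a) (hb : 0 < b)
    (hq : IsConfining q q') (hr : IsConfining r r') {θ : (Fin n → ℝ) × (Fin n → ℝ) → ℂ}
    (h : Tame θ) : Integrable (fun p => θ p * (wt a b q r p : ℂ)) (orth2 n) := by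
  obtain ⟨hm, C, hC, k, hbd⟩ := h
  -- `α < a` keeps the power at `x_i = 0` integrable after the loss of a factor `1 / x_i`.
  set α := min a 1 / 2 with hα
  have hα0 : 0 < α := by positivity
  have hα1 : α ≤ 1 := by have := min_le_right a 1; linarith
  have hαa : α < a := by have := min_le_left a 1; linarith
  have g1 : Integrable (fun x : Fin n → ℝ => ∏ i, env q (a - α - 1) k (x i)) (orthant n) :=
    Integrable.fintype_prod fun _ => env_integrable hq (by linarith) k
  have g2 : Integrable (fun x : Fin n → ℝ => ∏ i, env r (b - (1 - α)) (pairs n).card (x i))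
      (orthant n) :=
    Integrable.fintype_prod fun _ => env_integrable hr (by linarith) _
  refine Integrable.mono' ((g1.mul_prod g2).const_mul C) ?_ ?_
  · exact (hm.mul (Complex.measurable_ofReal.comp
      (measurable_wt hq.continuous hr.continuous))).aestronglyMeasurable
  · filter_upwards [ae_orth2 n] with p hp
    obtain ⟨hx, hy⟩ := hp
    have hQ := one_le_qmaj hx
    have := prod_inv_nonneg hx
    have key := mul_wt_le a b q r hx hy hα0.le hα1 (hbd p hx hy) (by positivity)
    rw [norm_mul, Complex.norm_real, Real.norm_of_nonneg (wt_nonneg a b q r hx hy)]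
    refine key.trans_eq ?_
    have e : ∏ i, env q (a - α - 1) k (p.1 i)
        = qmaj p.1 ^ k * (∏ i, (p.1 i)⁻¹) * ∏ i, env q (a - α) 0 (p.1 i) := by
      rw [qmaj, ← Finset.prod_pow, ← Finset.prod_mul_distrib, ← Finset.prod_mul_distrib]
      refine Finset.prod_congr rfl fun i _ => ?_
      rw [env, env, Real.rpow_sub_one (hx i).ne', pow_zero]
      ring
    rw [e]; ring

/-! ### Loop equations -/

/-- Bound of the weight along a line in direction `x_i`, which controls the boundary terms. -/
lemma wt_update_le {n : ℕ} {a b : ℝ} {q r : ℝ → ℝ} {x y : Fin n → ℝ} (hx : ∀ k, 0 < x k)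
    (hy : ∀ k, 0 < y k) (i : Fin n) {α : ℝ} (h0 : 0 ≤ α) (h1 : α ≤ 1) :
    ∃ D : ℝ, ∀ u, 0 < u → wt a b q r (Function.update x i u, y)
      ≤ D * env q (a - α) (pairs n).card u := by
  refine ⟨(∏ k ∈ Finset.univ.erase i, env q (a - α) (pairs n).card (x k)) *
    ∏ k, env r (b - (1 - α)) (pairs n).card (y k), fun u hu => ?_⟩
  have hxu : ∀ k, 0 < Function.update x i u k := by
    intro k
    by_cases h : k = i
    · subst h; simpa using hu
    · simpa [h] using hx k
  have key := mul_wt_le a b q r (p := (Function.update x i u, y)) hxu hy h0 h1 (t := 1)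
    (B := qmaj (Function.update x i u) ^ (pairs n).card) (by rw [one_mul]; exact abs_vdm_le hxu)
    (by have := one_le_qmaj hxu; positivity)
  rw [one_mul] at key
  refine key.trans_eq ?_
  have e : qmaj (Function.update x i u) ^ (pairs n).card *
      ∏ k, env q (a - α) 0 (Function.update x i u k)
      = ∏ k, env q (a - α) (pairs n).card (Function.update x i u k) := by
    rw [qmaj, ← Finset.prod_pow, ← Finset.prod_mul_distrib]
    refine Finset.prod_congr rfl fun k _ => ?_
    rw [env, env, pow_zero]; ring
  have e2 : ∏ k ∈ Finset.univ.erase i, env q (a - α) (pairs n).card (Function.update x i u k)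
      = ∏ k ∈ Finset.univ.erase i, env q (a - α) (pairs n).card (x k) :=
    Finset.prod_congr rfl fun k hk => by rw [Function.update_of_ne (Finset.ne_of_mem_erase hk)]
  simp only
  rw [← mul_assoc, e, ← Finset.mul_prod_erase _ _ (Finset.mem_univ i), e2, Function.update_self]
  ring

/-- Integration by parts in the variable `x_i` against the test function `f (x_i)`. The boundary
terms vanish because the weight decays like a positive power at `x_i = 0` and exponentially at
infinity. -/
lemma loop_single {n : ℕ} {a b : ℝ} {q q' r r' : ℝ → ℝ} (ha : 0 < a) (hb : 0 < b)
    (hq : IsConfining q q') (hr : IsConfining r r') {f f' : ℝ → ℂ} (hf : ∀ u, HasDerivAt f (f' u) u)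
    (hfm' : Measurable f') {C : ℝ} (hC : 0 ≤ C) (hfC : ∀ u, ‖f u‖ ≤ C) (hfC' : ∀ u, ‖f' u‖ ≤ C)
    (i : Fin n) :
    Integrable (fun p => (f' (p.1 i) + f (p.1 i) * (wtLog a q' i p : ℂ)) * (wt a b q r p : ℂ))
      (orth2 n) ∧
    ∫ p, (f' (p.1 i) + f (p.1 i) * (wtLog a q' i p : ℂ)) * (wt a b q r p : ℂ) ∂orth2 n = 0 := by
  have hfm : Measurable f :=
    (continuous_iff_continuousAt.2 fun u => (hf u).continuousAt).measurable
  have hT : Tame fun p : (Fin n → ℝ) × (Fin n → ℝ) =>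
      f' (p.1 i) + f (p.1 i) * (wtLog a q' i p : ℂ) :=
    (Tame.of_bounded (by fun_prop) C fun p _ _ => hfC' _).add
      ((tame_wtLog a hq i).bounded_mul (by fun_prop) hC fun p _ _ => hfC _)
  have hint := hT.integrable ha hb hq hr
  refine ⟨hint, ?_⟩
  set α := min a 1 / 2 with hα
  have hα0 : 0 < α := by positivity
  have hα1 : α ≤ 1 := by have := min_le_right a 1; linarith
  have hαa : α < a := by have := min_le_left a 1; linarith
  have hint' := hint
  rw [orth2] at hint' ⊢
  rw [integral_prod_symm _ hint']
  apply integral_eq_zero_of_ae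
  filter_upwards [hint'.prod_left_ae, ae_orthant n] with y hy hpos
  have hlim : ∀ x : Fin n → ℝ, (∀ k, 0 < x k) → ∀ l : Filter ℝ, (∀ᶠ u in l, 0 < u) →
      Tendsto (env q (a - α) (pairs n).card) l (𝓝 0) →
      Tendsto (fun u => f (Function.update x i u i) *
        (wt a b q r (Function.update x i u, y) : ℂ)) l (𝓝 0) := by
    intro x hx l hl ht
    obtain ⟨D, hD⟩ := wt_update_le (a := a) (b := b) (q := q) (r := r) hx hpos i hα0.le hα1
    refine squeeze_zero_norm' ?_ (by simpa using ht.const_mul (C * D))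
    filter_upwards [hl] with u hu
    have hxu : ∀ k, 0 < Function.update x i u k := by
      intro k
      by_cases h : k = i
      · subst h; simpa using hu
      · simpa [h] using hx k
    rw [norm_mul, Complex.norm_real, mul_assoc]
    have hw := wt_nonneg a b q r (p := (Function.update x i u, y)) hxu hpos
    rw [Real.norm_of_nonneg hw]
    exact mul_le_mul (hfC _) (hD u hu) hw hC
  refine integral_orthant_eq_zero i (F := fun x => f (x i) * (wt a b q r (x, y) : ℂ)) ?_ hy ?_ ?_
  · intro x hx
    simp only [Function.update_self]
    have h := (hf (x i)).mul
      (hasDerivAt_wt (a := a) (b := b) (r := r) hq.hasDeriv (p := (x, y)) hx hpos i).ofReal_comp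
    refine h.congr_deriv ?_
    simp only [Function.update_eq_self]
    push_cast; ring
  · exact fun x hx => hlim x hx _ self_mem_nhdsWithin (env_tendsto_zero hq (by linarith) _)
  · exact fun x hx => hlim x hx _ (eventually_gt_atTop 0) (env_tendsto_atTop hq _ _)

/-- The `x`-part of the loop equation with test function `f = 1`. -/
lemma loop_one {n : ℕ} {a b : ℝ} {q q' r r' : ℝ → ℝ} (ha : 0 < a) (hb : 0 < b)
    (hq : IsConfining q q') (hr : IsConfining r r') :
    Integrable (fun p : (Fin n → ℝ) × (Fin n → ℝ) =>
      (∑ i, ((a * (p.1 i)⁻¹ - q' (p.1 i) : ℝ) : ℂ)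
        - ∑ i, ∑ j, ((p.1 i : ℂ) + (p.2 j : ℂ))⁻¹) * (wt a b q r p : ℂ)) (orth2 n) ∧
    ∫ p : (Fin n → ℝ) × (Fin n → ℝ), (∑ i, ((a * (p.1 i)⁻¹ - q' (p.1 i) : ℝ) : ℂ)
        - ∑ i, ∑ j, ((p.1 i : ℂ) + (p.2 j : ℂ))⁻¹) * (wt a b q r p : ℂ) ∂orth2 n = 0 := by
  have h := fun i : Fin n => loop_single ha hb hq hr (f := fun _ => 1) (f' := fun _ => 0)
    (fun u => hasDerivAt_const u 1) measurable_const zero_le_one (by simp) (by simp) i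
  have e : (fun p : (Fin n → ℝ) × (Fin n → ℝ) => (∑ i, ((a * (p.1 i)⁻¹ - q' (p.1 i) : ℝ) : ℂ)
        - ∑ i, ∑ j, ((p.1 i : ℂ) + (p.2 j : ℂ))⁻¹) * (wt a b q r p : ℂ))
      = fun p => ∑ i, (0 + 1 * (wtLog a q' i p : ℂ)) * (wt a b q r p : ℂ) := by
    ext p
    rw [← Finset.sum_mul]
    congr 1
    -- translation invariance of the Vandermonde product
    have hz : ∑ i, vdmLog i p.1 = 0 := by
      unfold vdmLog
      rw [Finset.sum_comm]
      refine Finset.sum_eq_zero fun pr _ => ?_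
      rw [← Finset.sum_mul, ← Finset.mul_sum, Finset.sum_sub_distrib]
      simp
    have hzc : ∑ i, (vdmLog i p.1 : ℂ) = 0 := by exact_mod_cast hz
    simp only [wtLog, zero_add, one_mul, Complex.ofReal_sub, Complex.ofReal_add,
      Complex.ofReal_sum, Complex.ofReal_inv, Finset.sum_sub_distrib, Finset.sum_add_distrib, hzc]
  rw [e]
  refine ⟨integrable_finsetSum _ fun i _ => (h i).1, ?_⟩
  rw [integral_finsetSum _ fun i _ => (h i).1]
  exact Finset.sum_eq_zero fun i _ => (h i).2

lemma sq_sum_eq_pairs {n : ℕ} (g : Fin n → ℂ) :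
    (∑ i, g i) ^ 2 = ∑ i, g i ^ 2 + ∑ p ∈ pairs n, 2 * (g p.1 * g p.2) := by
  have hp : ∀ F : Fin n → Fin n → ℂ, ∑ p ∈ pairs n, F p.1 p.2 = ∑ i, ∑ j ∈ Finset.Ioi i, F i j := by
    intro F
    rw [pairs, Finset.sum_filter, ← Finset.univ_product_univ, Finset.sum_product]
    refine Finset.sum_congr rfl fun i _ => ?_
    rw [← Finset.sum_filter]
    refine Finset.sum_congr ?_ fun _ _ => rfl
    ext j; simp
  have := Finset.sum_sum_Ioi_add_eq_sum_sum_off_diag fun i j : Fin n => g i * g j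
  rw [hp fun i j => 2 * (g i * g j)]
  have e : ∑ i, ∑ j ∈ Finset.Ioi i, 2 * (g i * g j)
      = ∑ i, ∑ j ∈ Finset.Ioi i, (g j * g i + g i * g j) :=
    Finset.sum_congr rfl fun i _ => Finset.sum_congr rfl fun j _ => by ring
  rw [e, this, ← Finset.sum_add_distrib, sq, Finset.sum_mul_sum, Finset.sum_comm]
  refine Finset.sum_congr rfl fun i _ => ?_
  rw [Fintype.sum_eq_add_sum_compl i, sq]

/-- The `x`-part of the loop equation with test function `f(u) = 1 / (z - u)`. The double sum from
the Vandermonde product combines with `f' = f²` into the square of the resolvent, since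
`(f(v) - f(u)) / (v - u) = f(u) f(v)`. -/
lemma loop_resolvent {n : ℕ} {a b : ℝ} {q q' r r' : ℝ → ℝ} (ha : 0 < a) (hb : 0 < b)
    (hq : IsConfining q q') (hr : IsConfining r r') {z : ℂ} (hz : z.im ≠ 0) :
    Integrable (fun p : (Fin n → ℝ) × (Fin n → ℝ) =>
      ((∑ i, (z - (p.1 i : ℂ))⁻¹) ^ 2
        + ∑ i, (z - (p.1 i : ℂ))⁻¹ * ((a * (p.1 i)⁻¹ - q' (p.1 i) : ℝ) : ℂ)
        - ∑ i, ∑ j, (z - (p.1 i : ℂ))⁻¹ * ((p.1 i : ℂ) + (p.2 j : ℂ))⁻¹) * (wt a b q r p : ℂ))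
      (orth2 n) ∧
    ∫ p : (Fin n → ℝ) × (Fin n → ℝ), ((∑ i, (z - (p.1 i : ℂ))⁻¹) ^ 2
        + ∑ i, (z - (p.1 i : ℂ))⁻¹ * ((a * (p.1 i)⁻¹ - q' (p.1 i) : ℝ) : ℂ)
        - ∑ i, ∑ j, (z - (p.1 i : ℂ))⁻¹ * ((p.1 i : ℂ) + (p.2 j : ℂ))⁻¹) * (wt a b q r p : ℂ)
      ∂orth2 n = 0 := by
  have hne : ∀ u : ℝ, z - (u : ℂ) ≠ 0 := fun u h => hz (by
    have := congrArg Complex.im h; simpa using this)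
  have hb1 : ∀ u : ℝ, ‖(z - (u : ℂ))⁻¹‖ ≤ |z.im|⁻¹ := fun u => by
    rw [norm_inv]
    refine inv_anti₀ (abs_pos.2 hz) ?_
    simpa using Complex.abs_im_le_norm (z - (u : ℂ))
  set C := max |z.im|⁻¹ (|z.im|⁻¹ ^ 2)
  have h := fun i : Fin n => loop_single (n := n) ha hb hq hr (f := fun u => (z - (u : ℂ))⁻¹)
    (f' := fun u => (z - (u : ℂ))⁻¹ ^ 2) (C := C)
    (fun u => by
      have := ((Complex.ofRealCLM.hasDerivAt (x := u)).const_sub z).fun_inv (hne u)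
      refine this.congr_deriv ?_
      have := hne u
      simp)
    (by fun_prop) (le_max_of_le_right (by positivity)) (fun u => (hb1 u).trans (le_max_left _ _))
    (fun u => by
      rw [norm_pow]
      exact (pow_le_pow_left₀ (norm_nonneg _) (hb1 u) 2).trans (le_max_right _ _)) i
  have e : (fun p : (Fin n → ℝ) × (Fin n → ℝ) => ((∑ i, (z - (p.1 i : ℂ))⁻¹) ^ 2
        + ∑ i, (z - (p.1 i : ℂ))⁻¹ * ((a * (p.1 i)⁻¹ - q' (p.1 i) : ℝ) : ℂ)
        - ∑ i, ∑ j, (z - (p.1 i : ℂ))⁻¹ * ((p.1 i : ℂ) + (p.2 j : ℂ))⁻¹) * (wt a b q r p : ℂ))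
      = fun p => ∑ i, ((z - (p.1 i : ℂ))⁻¹ ^ 2 + (z - (p.1 i : ℂ))⁻¹ * (wtLog a q' i p : ℂ))
          * (wt a b q r p : ℂ) := by
    ext p
    -- colliding points make the weight vanish; elsewhere all the differences are invertible
    by_cases hv : vdm p.1 = 0
    · simp [wt, hv]
    rw [← Finset.sum_mul]
    congr 1
    have hdist : ∀ pr ∈ pairs n, p.1 pr.2 - p.1 pr.1 ≠ 0 := by
      rw [vdm_eq] at hv
      exact Finset.prod_ne_zero_iff.1 hv
    have hV : ∑ i, (z - (p.1 i : ℂ))⁻¹ * (vdmLog i p.1 : ℂ)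
        = ∑ pr ∈ pairs n, 2 * ((z - (p.1 pr.1 : ℂ))⁻¹ * (z - (p.1 pr.2 : ℂ))⁻¹) := by
      unfold vdmLog
      push_cast
      simp_rw [Finset.mul_sum]
      rw [Finset.sum_comm]
      refine Finset.sum_congr rfl fun pr hpr => ?_
      have hd : (p.1 pr.2 : ℂ) - (p.1 pr.1 : ℂ) ≠ 0 := by exact_mod_cast hdist pr hpr
      have h1 := hne (p.1 pr.1)
      have h2 := hne (p.1 pr.2)
      have e1 : ∀ i, (z - (p.1 i : ℂ))⁻¹ * (2 * ((if pr.2 = i then 1 else 0)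
          - (if pr.1 = i then 1 else 0)) * ((p.1 pr.2 : ℂ) - (p.1 pr.1 : ℂ))⁻¹)
          = (if pr.2 = i then 2 * (z - (p.1 i : ℂ))⁻¹ * ((p.1 pr.2 : ℂ) - (p.1 pr.1 : ℂ))⁻¹ else 0)
          - (if pr.1 = i then 2 * (z - (p.1 i : ℂ))⁻¹ * ((p.1 pr.2 : ℂ) - (p.1 pr.1 : ℂ))⁻¹
              else 0) := by
        intro i; split_ifs <;> ring
      refine (Finset.sum_congr rfl fun i _ => (?_ : _ = _)).trans ((Finset.sum_congr rfl
        fun i _ => e1 i).trans ?_)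
      · split_ifs <;> simp
      rw [Finset.sum_sub_distrib]
      simp only [Finset.sum_ite_eq, Finset.mem_univ, if_true]
      field_simp
      ring
    rw [sq_sum_eq_pairs, Finset.sum_add_distrib, ← hV]
    simp only [wtLog, Complex.ofReal_sub, Complex.ofReal_add, Complex.ofReal_sum, mul_sub, mul_add,
      Finset.sum_sub_distrib, Finset.sum_add_distrib, Finset.mul_sum, Complex.ofReal_inv]
    ring
  rw [e]
  refine ⟨integrable_finsetSum _ fun i _ => (h i).1, ?_⟩
  rw [integral_finsetSum _ fun i _ => (h i).1]
  exact Finset.sum_eq_zero fun i _ => (h i).2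

/-! ### Exchanging the two families of eigenvalues -/

/-- The weight is symmetric under exchanging the families together with their potentials, so
loop equations in the `x` variables yield loop equations in the `y` variables. -/
lemma loop_swap {n : ℕ} {a b : ℝ} {q r : ℝ → ℝ} {G : (Fin n → ℝ) × (Fin n → ℝ) → ℂ}
    (h : Integrable (fun p => G p * (wt b a r q p : ℂ)) (orth2 n) ∧
      ∫ p, G p * (wt b a r q p : ℂ) ∂orth2 n = 0) :
    Integrable (fun p => G p.swap * (wt a b q r p : ℂ)) (orth2 n) ∧
      ∫ p, G p.swap * (wt a b q r p : ℂ) ∂orth2 n = 0 := by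
  have e : (fun p => G p.swap * (wt a b q r p : ℂ))
      = fun p => (fun p => G p * (wt b a r q p : ℂ)) p.swap := by
    ext p; simp only [wt_swap]
  rw [e]
  exact ⟨h.1.swap, (integral_prod_swap _).trans h.2⟩

/-! ### Pointwise form of the master loop equation -/

/-- Partial fractions: `f_i g_j = -(f_i + g_j) / (x_i + y_j)` for `f_i = 1 / (z - x_i)` and
`g_j = 1 / (-z - y_j)`. -/
lemma sum_mul_sum_resolvent {n : ℕ} {z : ℂ} (hz : z.im ≠ 0) {x y : Fin n → ℝ}
    (hx : ∀ i, 0 < x i) (hy : ∀ j, 0 < y j) :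
    (∑ i, (z - (x i : ℂ))⁻¹) * ∑ j, (-z - (y j : ℂ))⁻¹
      = -(∑ i, ∑ j, (z - (x i : ℂ))⁻¹ * ((x i : ℂ) + (y j : ℂ))⁻¹)
        - ∑ j, ∑ i, (-z - (y j : ℂ))⁻¹ * ((y j : ℂ) + (x i : ℂ))⁻¹ := by
  rw [Finset.sum_comm (f := fun j i => (-z - (y j : ℂ))⁻¹ * ((y j : ℂ) + (x i : ℂ))⁻¹),
    Finset.sum_mul_sum, ← Finset.sum_neg_distrib, ← Finset.sum_sub_distrib]
  refine Finset.sum_congr rfl fun i _ => ?_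
  rw [← Finset.sum_neg_distrib, ← Finset.sum_sub_distrib]
  refine Finset.sum_congr rfl fun j _ => ?_
  have h1 : z - (x i : ℂ) ≠ 0 := fun h => hz (by
    have := congrArg Complex.im h; simpa using this)
  have h2 : -z - (y j : ℂ) ≠ 0 := fun h => hz (by
    have := congrArg Complex.im h; simpa using this)
  have h3 : (x i : ℂ) + (y j : ℂ) ≠ 0 := by exact_mod_cast (add_pos (hx i) (hy j)).ne'
  have h4 : (y j : ℂ) + (x i : ℂ) ≠ 0 := by rwa [add_comm]
  rw [add_comm (y j : ℂ)]
  field_simp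
  ring

lemma norm_resolvent_le {z : ℂ} (hz : z.im ≠ 0) (u : ℝ) : ‖(z - (u : ℂ))⁻¹‖ ≤ |z.im|⁻¹ := by
  rw [norm_inv]
  refine inv_anti₀ (abs_pos.2 hz) ?_
  simpa using Complex.abs_im_le_norm (z - (u : ℂ))

/-- The left-hand side is bounded off the real axis. -/
lemma tame_quadratic {n : ℕ} {z : ℂ} (hz : z.im ≠ 0) (c A B : ℂ) :
    Tame fun p : (Fin n → ℝ) × (Fin n → ℝ) =>
      (A - c * ∑ i, (z - (p.1 i : ℂ))⁻¹) ^ 2 + (B - c * ∑ j, (-z - (p.2 j : ℂ))⁻¹) ^ 2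
        + (A - c * ∑ i, (z - (p.1 i : ℂ))⁻¹) * (B - c * ∑ j, (-z - (p.2 j : ℂ))⁻¹) := by
  have hz' : (-z).im ≠ 0 := by simpa using hz
  have hS : ∀ (ζ : ℂ) (_ : ζ.im ≠ 0) (D : ℂ) (u : Fin n → ℝ),
      ‖D - c * ∑ i, (ζ - (u i : ℂ))⁻¹‖ ≤ ‖D‖ + ‖c‖ * (n * |ζ.im|⁻¹) := by
    intro ζ hζ D u
    refine (norm_sub_le _ _).trans ?_
    rw [norm_mul]
    gcongr
    refine (norm_sum_le_of_le _ fun i _ => norm_resolvent_le hζ (u i)).trans ?_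
    simp
  refine Tame.of_bounded (by fun_prop) ((‖A‖ + ‖c‖ * (n * |z.im|⁻¹)) ^ 2
    + (‖B‖ + ‖c‖ * (n * |(-z).im|⁻¹)) ^ 2
    + (‖A‖ + ‖c‖ * (n * |z.im|⁻¹)) * (‖B‖ + ‖c‖ * (n * |(-z).im|⁻¹))) fun p _ _ => ?_
  have h1 := hS z hz A p.1
  have h2 := hS (-z) hz' B p.2
  refine (norm_add₃_le).trans ?_
  rw [norm_pow, norm_pow, norm_mul]
  gcongr

end CauchyModel

/-- Quadratic master loop equation (eq. YQMLE) for the Cauchy two-matrix model: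
for every `x ∈ ℂ ∖ ℝ`, all the expectations below are finite and
`E[Y₁(x)² + Y₂(x)² + Y₁(x)Y₂(x)] = E[R(x)] − x⁻¹·E[I₁ + I₂]`,
where `E[g] = (∫_S g·w)/Z` is the expectation with respect to the Cauchy eigenvalue weight
`w` on `S = (0,∞)^N × (0,∞)^N` with total mass `Z > 0`. -/
theorem cauchy_model_quadratic_master_loop_equation
    (N : ℕ) (hN : 1 ≤ N) (T : ℝ) (hT : 0 < T)
    (a₁ a₂ : ℝ) (ha₁ : 0 < a₁) (ha₂ : 0 < a₂)
    (d₁ d₂ : ℕ) (hd₁ : 1 ≤ d₁) (hd₂ : 1 ≤ d₂)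
    (t₁ t₂ : ℕ → ℝ) (ht₁ : 0 < t₁ d₁) (ht₂ : 0 < t₂ d₂)
    -- the potentials V_i(x) = −t₋₁^{(i)} ln x + ∑_{k=1}^{d_i} t_k^{(i)} x^k
    (V₁ V₂ : ℝ → ℝ)
    (hV₁ : ∀ x : ℝ, V₁ x = -a₁ * Real.log x + ∑ k ∈ Finset.Icc 1 d₁, t₁ k * x ^ k)
    (hV₂ : ∀ x : ℝ, V₂ x = -a₂ * Real.log x + ∑ k ∈ Finset.Icc 1 d₂, t₂ k * x ^ k)
    -- the derivatives V₁′, V₂′ as functions of a complex variable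
    (V₁' V₂' : ℂ → ℂ)
    (hV₁' : ∀ z : ℂ, V₁' z =
      -(a₁ : ℂ) / z + ∑ k ∈ Finset.Icc 1 d₁, (k : ℂ) * (t₁ k : ℂ) * z ^ (k - 1))
    (hV₂' : ∀ z : ℂ, V₂' z =
      -(a₂ : ℂ) / z + ∑ k ∈ Finset.Icc 1 d₂, (k : ℂ) * (t₂ k : ℂ) * z ^ (k - 1))
    -- the domain (0,∞)^N × (0,∞)^N
    (S : Set ((Fin N → ℝ) × (Fin N → ℝ)))
    (hS : S = {p | (∀ i, 0 < p.1 i) ∧ (∀ j, 0 < p.2 j)})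
    -- the Vandermonde product
    (Δ : (Fin N → ℝ) → ℝ)
    (hΔ : ∀ x : Fin N → ℝ, Δ x = ∏ i : Fin N, ∏ j ∈ Finset.Ioi i, (x j - x i))
    -- the Cauchy eigenvalue weight, assumed integrable with total mass Z > 0
    (w : ((Fin N → ℝ) × (Fin N → ℝ)) → ℝ)
    (hw : ∀ p, w p = (Δ p.1) ^ 2 * (Δ p.2) ^ 2 *
        Real.exp (-((N : ℝ) / T) * ∑ i : Fin N, (V₁ (p.1 i) + V₂ (p.2 i))) *
        ∏ i : Fin N, ∏ j : Fin N, (p.1 i + p.2 j)⁻¹)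
    (hwInt : IntegrableOn w S volume)
    (Z : ℝ) (hZ : Z = ∫ p in S, w p) (hZpos : 0 < Z)
    -- the spectral parameter x ∈ ℂ ∖ ℝ
    (x : ℂ) (hx : x.im ≠ 0)
    -- the deterministic functions U₁′(x), U₂′(x)
    (U₁' U₂' : ℂ)
    (hU₁' : U₁' = (2 * V₁' x - V₂' (-x)) / 3)
    (hU₂' : U₂' = (-V₁' x + 2 * V₂' (-x)) / 3)
    -- the random variables W₁, W₂, Y₁, Y₂, P₁, P₂, R, I₁, I₂
    (W₁ W₂ Y₁ Y₂ P₁ P₂ R I₁ I₂ : ((Fin N → ℝ) × (Fin N → ℝ)) → ℂ)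
    (hW₁ : ∀ p, W₁ p = ((T : ℂ) / (N : ℂ)) * ∑ i : Fin N, (x - (p.1 i : ℂ))⁻¹)
    (hW₂ : ∀ p, W₂ p = -((T : ℂ) / (N : ℂ)) * ∑ j : Fin N, (x + (p.2 j : ℂ))⁻¹)
    (hY₁ : ∀ p, Y₁ p = U₁' - W₁ p)
    (hY₂ : ∀ p, Y₂ p = U₂' - W₂ p)
    (hP₁ : ∀ p, P₁ p = ((T : ℂ) / (N : ℂ)) *
        ∑ i : Fin N, (V₁' x - V₁' ((p.1 i : ℝ) : ℂ)) / (x - (p.1 i : ℂ)))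
    (hP₂ : ∀ p, P₂ p = -((T : ℂ) / (N : ℂ)) *
        ∑ j : Fin N, (V₂' (-x) - V₂' ((p.2 j : ℝ) : ℂ)) / (x + (p.2 j : ℂ)))
    (hR : ∀ p, R p = U₁' ^ 2 + U₂' ^ 2 + U₁' * U₂' - P₁ p - P₂ p)
    (hI₁ : ∀ p, I₁ p = ((T : ℂ) / (N : ℂ)) * ∑ i : Fin N, V₁' ((p.1 i : ℝ) : ℂ)
        + ((T : ℂ) ^ 2 / (N : ℂ) ^ 2) *
            ∑ i : Fin N, ∑ j : Fin N, ((p.1 i : ℂ) + (p.2 j : ℂ))⁻¹)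
    (hI₂ : ∀ p, I₂ p = -(((T : ℂ) / (N : ℂ)) * ∑ j : Fin N, V₂' ((p.2 j : ℝ) : ℂ))
        - ((T : ℂ) ^ 2 / (N : ℂ) ^ 2) *
            ∑ i : Fin N, ∑ j : Fin N, ((p.1 i : ℂ) + (p.2 j : ℂ))⁻¹) :
    IntegrableOn (fun p => ((Y₁ p) ^ 2 + (Y₂ p) ^ 2 + Y₁ p * Y₂ p) * (w p : ℂ)) S volume ∧
    IntegrableOn (fun p => R p * (w p : ℂ)) S volume ∧
    IntegrableOn (fun p => (I₁ p + I₂ p) * (w p : ℂ)) S volume ∧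
    (∫ p in S, ((Y₁ p) ^ 2 + (Y₂ p) ^ 2 + Y₁ p * Y₂ p) * (w p : ℂ)) / (Z : ℂ)
      = (∫ p in S, R p * (w p : ℂ)) / (Z : ℂ)
        - x⁻¹ * ((∫ p in S, (I₁ p + I₂ p) * (w p : ℂ)) / (Z : ℂ)) := by
  have hN0 : (0 : ℝ) < N := by exact_mod_cast hN
  set κ : ℝ := (N : ℝ) / T with hκ
  have hκ0 : 0 < κ := by positivity
  have hNC : (N : ℂ) ≠ 0 := by exact_mod_cast hN0.ne'
  have hTC : (T : ℂ) ≠ 0 := by exact_mod_cast hT.ne'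
  set c : ℂ := (T : ℂ) / (N : ℂ) with hc
  have hcκ : c * (κ : ℂ) = 1 := by rw [hc, hκ]; push_cast; field_simp
  have hc2 : (T : ℂ) ^ 2 / (N : ℂ) ^ 2 = c ^ 2 := by rw [hc, div_pow]
  -- the factor `N / T` is absorbed into the potentials
  set q : ℝ → ℝ := fun u => ∑ k ∈ Finset.Icc 1 d₁, (κ * t₁ k) * u ^ k with hqdef
  set r : ℝ → ℝ := fun u => ∑ k ∈ Finset.Icc 1 d₂, (κ * t₂ k) * u ^ k with hrdef
  set q' : ℝ → ℝ := fun u => ∑ k ∈ Finset.Icc 1 d₁, (k : ℝ) * (κ * t₁ k) * u ^ (k - 1) with hq'def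
  set r' : ℝ → ℝ := fun u => ∑ k ∈ Finset.Icc 1 d₂, (k : ℝ) * (κ * t₂ k) * u ^ (k - 1) with hr'def
  have hq : CauchyModel.IsConfining q q' :=
    CauchyModel.isConfining_poly d₁ hd₁ (fun k => κ * t₁ k) (by positivity)
  have hr : CauchyModel.IsConfining r r' :=
    CauchyModel.isConfining_poly d₂ hd₂ (fun k => κ * t₂ k) (by positivity)
  have hA : 0 < κ * a₁ := by positivity
  have hB : 0 < κ * a₂ := by positivity
  have hwt : w = CauchyModel.wt (κ * a₁) (κ * a₂) q r := by
    funext p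
    rw [hw, CauchyModel.wt, hΔ, hΔ, CauchyModel.vdm, CauchyModel.vdm, neg_mul, Finset.mul_sum]
    congr 4
    refine Finset.sum_congr rfl fun i _ => ?_
    simp only [hV₁, hV₂, hqdef, hrdef, mul_add, Finset.mul_sum, mul_assoc]
    ring
  have hv₁ : ∀ u : ℝ, ((κ * a₁ * u⁻¹ - q' u : ℝ) : ℂ) = -((κ : ℂ) * V₁' (u : ℂ)) := by
    intro u
    rw [hV₁', hq'def, mul_add, Finset.mul_sum]
    push_cast
    rw [neg_add, ← sub_eq_add_neg]
    congr 1
    · ring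
    · exact Finset.sum_congr rfl fun k _ => by ring
  have hv₂ : ∀ u : ℝ, ((κ * a₂ * u⁻¹ - r' u : ℝ) : ℂ) = -((κ : ℂ) * V₂' (u : ℂ)) := by
    intro u
    rw [hV₂', hr'def, mul_add, Finset.mul_sum]
    push_cast
    rw [neg_add, ← sub_eq_add_neg]
    congr 1
    · ring
    · exact Finset.sum_congr rfl fun k _ => by ring
  have hμ : (volume : Measure ((Fin N → ℝ) × (Fin N → ℝ))).restrict S = CauchyModel.orth2 N := by
    rw [CauchyModel.orth2_eq, hS]
  have hx' : (-x).im ≠ 0 := by simpa using hx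
  obtain ⟨i1, z1⟩ := CauchyModel.loop_resolvent (n := N) hA hB hq hr hx
  obtain ⟨i2, z2⟩ := CauchyModel.loop_swap (CauchyModel.loop_resolvent (n := N) hB hA hr hq hx')
  obtain ⟨i3, z3⟩ := CauchyModel.loop_one (n := N) hA hB hq hr
  obtain ⟨i4, z4⟩ := CauchyModel.loop_swap (CauchyModel.loop_one (n := N) hB hA hr hq)
  rw [← hwt] at i1 z1 i2 z2 i3 z3 i4 z4
  set Θ₁ : (Fin N → ℝ) × (Fin N → ℝ) → ℂ := fun p => (∑ i, (x - (p.1 i : ℂ))⁻¹) ^ 2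
    + ∑ i, (x - (p.1 i : ℂ))⁻¹ * ((κ * a₁ * (p.1 i)⁻¹ - q' (p.1 i) : ℝ) : ℂ)
    - ∑ i, ∑ j, (x - (p.1 i : ℂ))⁻¹ * ((p.1 i : ℂ) + (p.2 j : ℂ))⁻¹ with hΘ₁
  set Θ₂ : (Fin N → ℝ) × (Fin N → ℝ) → ℂ := fun p => (∑ j, (-x - (p.2 j : ℂ))⁻¹) ^ 2
    + ∑ j, (-x - (p.2 j : ℂ))⁻¹ * ((κ * a₂ * (p.2 j)⁻¹ - r' (p.2 j) : ℝ) : ℂ)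
    - ∑ j, ∑ i, (-x - (p.2 j : ℂ))⁻¹ * ((p.2 j : ℂ) + (p.1 i : ℂ))⁻¹ with hΘ₂
  set Θ₃ : (Fin N → ℝ) × (Fin N → ℝ) → ℂ := fun p =>
    ∑ i, ((κ * a₁ * (p.1 i)⁻¹ - q' (p.1 i) : ℝ) : ℂ)
    - ∑ i, ∑ j, ((p.1 i : ℂ) + (p.2 j : ℂ))⁻¹ with hΘ₃
  set Θ₄ : (Fin N → ℝ) × (Fin N → ℝ) → ℂ := fun p =>
    ∑ j, ((κ * a₂ * (p.2 j)⁻¹ - r' (p.2 j) : ℝ) : ℂ)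
    - ∑ j, ∑ i, ((p.2 j : ℂ) + (p.1 i : ℂ))⁻¹ with hΘ₄
  change Integrable (fun p => Θ₁ p * (w p : ℂ)) _ at i1
  change Integrable (fun p => Θ₂ p * (w p : ℂ)) _ at i2
  change Integrable (fun p => Θ₃ p * (w p : ℂ)) _ at i3
  change Integrable (fun p => Θ₄ p * (w p : ℂ)) _ at i4
  change ∫ p, Θ₁ p * (w p : ℂ) ∂_ = 0 at z1
  change ∫ p, Θ₂ p * (w p : ℂ) ∂_ = 0 at z2
  change ∫ p, Θ₃ p * (w p : ℂ) ∂_ = 0 at z3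
  change ∫ p, Θ₄ p * (w p : ℂ) ∂_ = 0 at z4
  have hneg : ∀ u : ℝ, (x + (u : ℂ))⁻¹ = -(-x - (u : ℂ))⁻¹ := fun u => by
    rw [← inv_neg]; congr 1; ring
  have hY₁p : ∀ p, Y₁ p = U₁' - c * ∑ i, (x - (p.1 i : ℂ))⁻¹ := fun p => by rw [hY₁, hW₁]
  have hY₂p : ∀ p, Y₂ p = U₂' - c * ∑ j, (-x - (p.2 j : ℂ))⁻¹ := fun p => by
    rw [hY₂, hW₂]
    simp only [hneg, Finset.sum_neg_distrib]
    ring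
  have hYt : CauchyModel.Tame fun p => Y₁ p ^ 2 + Y₂ p ^ 2 + Y₁ p * Y₂ p := by
    simp only [hY₁p, hY₂p]
    exact CauchyModel.tame_quadratic hx c U₁' U₂'
  have iY := hYt.integrable hA hB hq hr
  rw [← hwt] at iY
  -- the quadratic expression and `R` differ by a combination of the two resolvent loop equations
  have hRY : (fun p => R p * (w p : ℂ)) =ᵐ[CauchyModel.orth2 N]
      fun p => (Y₁ p ^ 2 + Y₂ p ^ 2 + Y₁ p * Y₂ p) * (w p : ℂ)
        - (c ^ 2 * (Θ₁ p * (w p : ℂ)) + c ^ 2 * (Θ₂ p * (w p : ℂ))) := by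
    filter_upwards [CauchyModel.ae_orth2 N] with p hp
    obtain ⟨hpx, hpy⟩ := hp
    have key := CauchyModel.sum_mul_sum_resolvent hx hpx hpy
    have hP₁p : P₁ p = c * (V₁' x * ∑ i, (x - (p.1 i : ℂ))⁻¹)
        - c * ∑ i, (x - (p.1 i : ℂ))⁻¹ * V₁' (p.1 i : ℂ) := by
      rw [hP₁, ← mul_sub, Finset.mul_sum (a := V₁' x), ← Finset.sum_sub_distrib]
      congr 1
      exact Finset.sum_congr rfl fun i _ => by rw [div_eq_mul_inv]; ring
    have hP₂p : P₂ p = c * (V₂' (-x) * ∑ j, (-x - (p.2 j : ℂ))⁻¹)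
        - c * ∑ j, (-x - (p.2 j : ℂ))⁻¹ * V₂' (p.2 j : ℂ) := by
      rw [hP₂, ← mul_sub, neg_mul, ← mul_neg, ← Finset.sum_neg_distrib,
        Finset.mul_sum (a := V₂' (-x)), ← Finset.sum_sub_distrib]
      congr 1
      exact Finset.sum_congr rfl fun j _ => by rw [div_eq_mul_inv, hneg]; ring
    have e1 : Θ₁ p = (∑ i, (x - (p.1 i : ℂ))⁻¹) ^ 2
        - (κ : ℂ) * ∑ i, (x - (p.1 i : ℂ))⁻¹ * V₁' (p.1 i : ℂ)
        - ∑ i, ∑ j, (x - (p.1 i : ℂ))⁻¹ * ((p.1 i : ℂ) + (p.2 j : ℂ))⁻¹ := by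
      simp only [hΘ₁, hv₁, Finset.mul_sum, mul_neg, Finset.sum_neg_distrib, ← sub_eq_add_neg,
        mul_left_comm]
    have e2 : Θ₂ p = (∑ j, (-x - (p.2 j : ℂ))⁻¹) ^ 2
        - (κ : ℂ) * ∑ j, (-x - (p.2 j : ℂ))⁻¹ * V₂' (p.2 j : ℂ)
        - ∑ j, ∑ i, (-x - (p.2 j : ℂ))⁻¹ * ((p.2 j : ℂ) + (p.1 i : ℂ))⁻¹ := by
      simp only [hΘ₂, hv₂, Finset.mul_sum, mul_neg, Finset.sum_neg_distrib, ← sub_eq_add_neg,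
        mul_left_comm]
    rw [hR, hP₁p, hP₂p, hY₁p, hY₂p, e1, e2, hU₁', hU₂']
    generalize (∑ i, (x - (p.1 i : ℂ))⁻¹) = F at *
    generalize (∑ j, (-x - (p.2 j : ℂ))⁻¹) = G at *
    generalize ∑ i, (x - (p.1 i : ℂ))⁻¹ * V₁' (p.1 i : ℂ) = F₁ at *
    generalize ∑ j, (-x - (p.2 j : ℂ))⁻¹ * V₂' (p.2 j : ℂ) = G₁ at *
    generalize ∑ i, ∑ j, (x - (p.1 i : ℂ))⁻¹ * ((p.1 i : ℂ) + (p.2 j : ℂ))⁻¹ = D₁ at *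
    generalize ∑ j, ∑ i, (-x - (p.2 j : ℂ))⁻¹ * ((p.2 j : ℂ) + (p.1 i : ℂ))⁻¹ = D₂ at *
    linear_combination (-(c ^ 2 * (w p : ℂ))) * key - (c * (F₁ + G₁) * (w p : ℂ)) * hcκ
  -- `I₁ + I₂` is a combination of the two loop equations with constant test function
  have hI : (fun p => (I₁ p + I₂ p) * (w p : ℂ))
      = fun p => c ^ 2 * (Θ₄ p * (w p : ℂ)) - c ^ 2 * (Θ₃ p * (w p : ℂ)) := by
    funext p
    have e3 : Θ₃ p = -((κ : ℂ) * ∑ i, V₁' (p.1 i : ℂ))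
        - ∑ i, ∑ j, ((p.1 i : ℂ) + (p.2 j : ℂ))⁻¹ := by
      simp only [hΘ₃, hv₁, Finset.mul_sum, Finset.sum_neg_distrib]
    have e4 : Θ₄ p = -((κ : ℂ) * ∑ j, V₂' (p.2 j : ℂ))
        - ∑ i, ∑ j, ((p.1 i : ℂ) + (p.2 j : ℂ))⁻¹ := by
      rw [Finset.sum_comm (f := fun i j => ((p.1 i : ℂ) + (p.2 j : ℂ))⁻¹)]
      simp only [hΘ₄, hv₂, Finset.mul_sum, Finset.sum_neg_distrib, add_comm]
    rw [hI₁, hI₂, e3, e4, hc2]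
    linear_combination (-(c * (∑ i, V₁' (p.1 i : ℂ) - ∑ j, V₂' (p.2 j : ℂ)) * (w p : ℂ))) * hcκ
  simp only [IntegrableOn]
  rw [hμ]
  have i12 : Integrable (fun p => c ^ 2 * (Θ₁ p * (w p : ℂ)) + c ^ 2 * (Θ₂ p * (w p : ℂ)))
      (CauchyModel.orth2 N) := (i1.const_mul (c ^ 2)).add (i2.const_mul (c ^ 2))
  have iR : Integrable (fun p => R p * (w p : ℂ)) (CauchyModel.orth2 N) :=
    (iY.sub i12).congr hRY.symm
  have eR : ∫ p, R p * (w p : ℂ) ∂CauchyModel.orth2 N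
      = ∫ p, (Y₁ p ^ 2 + Y₂ p ^ 2 + Y₁ p * Y₂ p) * (w p : ℂ) ∂CauchyModel.orth2 N := by
    rw [integral_congr_ae hRY, integral_sub iY i12,
      integral_add (i1.const_mul _) (i2.const_mul _), integral_const_mul, integral_const_mul,
      z1, z2]
    simp
  have iI : Integrable (fun p => (I₁ p + I₂ p) * (w p : ℂ)) (CauchyModel.orth2 N) := by
    rw [hI]; exact (i4.const_mul _).sub (i3.const_mul _)
  have eI : ∫ p, (I₁ p + I₂ p) * (w p : ℂ) ∂CauchyModel.orth2 N = 0 := by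
    rw [hI, integral_sub (i4.const_mul _) (i3.const_mul _), integral_const_mul, integral_const_mul,
      z3, z4]
    simp
  refine ⟨iY, iR, iI, ?_⟩
  rw [eR, eI]
  simp
end
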